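/- arXiv:1410.6697 — 3 statements merged into one kernel-verified Lean document; each statement's English description precedes it below -/
import Mathlib

section
/- Let k ≥ 2 be an integer, let Ψ : ℕ → (0,∞) satisfy Ψ(x) < 1/(2x) for all sufficiently large x and Ψ(l·x) ≤ l·Ψ(x) for all positive integers l, x, and let I ⊆ (−1/2, 1/2) be a non-empty open interval. Then the set (𝒦_k(Ψ) \ ⋃_{0<c<1} 𝒦_k(cΨ)) ∩ I is uncountable. -/
open Filter Set

/-- `Kk k Ψ` is the set of real `ζ` not algebraic of degree at most `k` such that
`max_{1≤j≤k} |q·ζ^j - p_j| ≤ Ψ q` holds for infinitely many tuples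
`(q, p₁, …, p_k) ∈ ℕ × ℤ^k` with `q ≥ 1`. -/
def Kk (k : ℕ) (Ψ : ℕ → ℝ) : Set ℝ :=
  {ζ : ℝ | (∀ P : Polynomial ℤ, P ≠ 0 → P.natDegree ≤ k → (Polynomial.aeval ζ) P ≠ 0) ∧
    {qp : ℕ × (Fin k → ℤ) | 1 ≤ qp.1 ∧
      ∀ j : Fin k, |(qp.1 : ℝ) * ζ ^ ((j : ℕ) + 1) - (qp.2 j : ℝ)| ≤ Ψ qp.1}.Infinite}

theorem pj_pow_sub (x y : ℝ) (hx : |x| ≤ 1 / 2) (hy : |y| ≤ 1 / 2) (j : ℕ) :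
    |x ^ (j + 1) - y ^ (j + 1)| ≤ |x - y| := by
  induction j with
  | zero => simp
  | succ j ih =>
    have e : x ^ (j + 1 + 1) - y ^ (j + 1 + 1)
        = x * (x ^ (j + 1) - y ^ (j + 1)) + y ^ (j + 1) * (x - y) := by ring
    have h2 : |y| ^ (j + 1) ≤ 1 / 2 := by
      rw [pow_succ]
      have : |y| ^ j ≤ 1 := pow_le_one₀ (abs_nonneg _) (by linarith)
      nlinarith [abs_nonneg y]
    rw [e]
    calc _ ≤ |x| * |x ^ (j + 1) - y ^ (j + 1)| + |y| ^ (j + 1) * |x - y| := by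
          refine (abs_add_le _ _).trans ?_
          rw [abs_mul, abs_mul, abs_pow]
      _ ≤ 1 / 2 * |x - y| + 1 / 2 * |x - y| := by gcongr
      _ = _ := by ring

/-- One step of the construction. -/
theorem pj_step (φ : ℕ → ℝ) (N : ℕ) (hpos : ∀ q, 0 < φ q)
    (hφ : ∀ q : ℕ, N ≤ q → φ q ≤ 1 / (2 * (q : ℝ) ^ 4))
    (p : ℤ) (q : ℕ) (hq : 2 ≤ q) (hN : N ≤ q) (hc : IsCoprime p (q : ℤ)) (t : ℝ) :
    ∃ (p' : ℤ) (q' : ℕ), p' * q - p * q' = 1 ∧ q < q' ∧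
      (q : ℝ) * φ q * q' ≤ 1 + 3 * q ^ 2 * φ q ∧
      (p' : ℝ) / q' + φ q' ≤ (p : ℝ) / q + φ q ∧
      t ∉ Icc ((p' : ℝ) / q') ((p' : ℝ) / q' + φ q') := by
  have hq0 : (0 : ℝ) < q := by positivity
  have hf := hpos q
  obtain ⟨u, v, huv⟩ := hc
  -- q1 = -u + m q
  set Y : ℝ := 1 / (q * φ q) with hY
  have hYe : (q : ℝ) * φ q * Y = 1 := by rw [hY]; field_simp
  have hYq : 2 * (q : ℝ) ^ 3 ≤ Y := by
    have h1 := hφ q hN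
    rw [le_div_iff₀ (by positivity)] at h1
    rw [hY, le_div_iff₀ (by positivity)]
    nlinarith
  have hq2 : (2 : ℝ) ≤ q := by exact_mod_cast hq
  have hYpos : 0 < Y := lt_of_lt_of_le (by positivity) hYq
  obtain ⟨m, hm1, hm2⟩ : ∃ m : ℤ, Y + q ≤ (-u : ℝ) + m * q ∧ (-u : ℝ) + m * q < Y + 2 * q := by
    refine ⟨⌈(Y + q + u) / q⌉, ?_, ?_⟩
    · have := Int.le_ceil ((Y + q + u) / (q : ℝ))
      rw [div_le_iff₀ hq0] at this
      linarith
    · have := Int.ceil_lt_add_one ((Y + q + u) / (q : ℝ))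
      rw [← sub_lt_iff_lt_add, lt_div_iff₀ hq0] at this
      linarith
  obtain ⟨q1, hq1⟩ : ∃ q1 : ℕ, (q1 : ℤ) = -u + m * q := by
    have : (0 : ℤ) ≤ -u + m * q := by
      have : (0 : ℝ) ≤ ((-u + m * q : ℤ) : ℝ) := by push_cast; linarith
      exact_mod_cast this
    exact ⟨_, Int.toNat_of_nonneg this⟩
  set p1 : ℤ := v + m * p with hp1
  have hd1 : p1 * q - p * q1 = 1 := by rw [hq1, hp1]; linear_combination huv
  have hq1r : (q1 : ℝ) = -u + m * q := by exact_mod_cast hq1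
  rw [← hq1r] at hm1 hm2
  -- general fact
  have gen : ∀ (p' : ℤ) (q' : ℕ), p' * q - p * q' = 1 → Y + q ≤ (q' : ℝ) → (q' : ℝ) < Y + 3 * q →
      q < q' ∧ (q : ℝ) * φ q * q' ≤ 1 + 3 * q ^ 2 * φ q ∧
      (p' : ℝ) / q' + φ q' ≤ (p : ℝ) / q + φ q := by
    intro p' q' hd h1 h2
    have hlt : q < q' := by
      have : (q : ℝ) < q' := by linarith
      exact_mod_cast this
    have hq'0 : (0 : ℝ) < q' := by linarith
    refine ⟨hlt, ?_, ?_⟩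
    · have : (q : ℝ) * φ q * q' ≤ q * φ q * (Y + 3 * q) := by gcongr
      nlinarith
    · have hdr : (p' : ℝ) * q - p * q' = 1 := by exact_mod_cast hd
      have e : (p' : ℝ) / q' = p / q + 1 / (q * q') := by
        field_simp
        linarith
      have h3 := hφ q' (by omega)
      have h4 : (q : ℝ) * φ q * (Y + q) ≤ q * φ q * q' := by gcongr
      have h5 : 1 + (q : ℝ) ^ 2 * φ q ≤ q * φ q * q' := by nlinarith
      have h6 : 1 / (q * q' : ℝ) + q * φ q / q' ≤ φ q := by
        have : 1 / (q * q' : ℝ) + q * φ q / q' = (1 + (q : ℝ) ^ 2 * φ q) / (q * q') := by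
          field_simp
        rw [this, div_le_iff₀ (by positivity)]
        linarith
      have h7 : 1 / (2 * (q' : ℝ) ^ 4) ≤ q * φ q / q' := by
        rw [div_le_div_iff₀ (by positivity) (by positivity)]
        have h8 : 1 ≤ (q : ℝ) * φ q * q' := by
          have : 0 < (q : ℝ) ^ 2 * φ q := by positivity
          linarith
        have h9 : (1 : ℝ) ≤ q' ^ 2 := one_le_pow₀ (by linarith)
        have h10 : (1 : ℝ) ≤ (q : ℝ) * φ q * q' * q' ^ 2 := by nlinarith
        nlinarith
      linarith
  by_cases ht : t ∈ Icc ((p1 : ℝ) / q1) ((p1 : ℝ) / q1 + φ q1)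
  · have hd2 : (p1 + p) * q - p * ((q1 + q : ℕ) : ℤ) = 1 := by push_cast; linarith
    have := gen (p1 + p) (q1 + q) hd2 (by push_cast; linarith) (by push_cast; linarith)
    refine ⟨p1 + p, q1 + q, hd2, this.1, this.2.1, this.2.2, ?_⟩
    intro ht2
    have h1 := ht.1
    have h2 := ht2.2
    have h3 := hφ (q1 + q) (by omega)
    have hq1pos : (0 : ℝ) < q1 := by linarith
    push_cast at h1 h2 h3
    have e : (p1 : ℝ) / q1 = (p1 + p) / (q1 + q) + 1 / (q1 * (q1 + q)) := by
      have hdr : (p1 : ℝ) * q - p * q1 = 1 := by exact_mod_cast hd1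
      field_simp
      linarith
    have h4 : 1 / (q1 * (q1 + q) : ℝ) ≤ 1 / (2 * (q1 + q : ℝ) ^ 4) := by linarith
    rw [div_le_div_iff₀ (by positivity) (by positivity)] at h4
    have hz : (1 : ℝ) ≤ (q1 + q : ℝ) := by linarith
    have : (q1 + q : ℝ) ^ 2 ≤ (q1 + q : ℝ) ^ 4 := pow_le_pow_right₀ hz (by norm_num)
    nlinarith
  · have := gen p1 q1 hd1 hm1 (by linarith)
    exact ⟨p1, q1, hd1, this.1, this.2.1, this.2.2, ht⟩

/-- Starting point. -/
theorem pj_start (φ : ℕ → ℝ) (N : ℕ) (hpos : ∀ q, 0 < φ q)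
    (hφ : ∀ q : ℕ, N ≤ q → φ q ≤ 1 / (2 * (q : ℝ) ^ 4)) (a b : ℝ) (hab : a < b) :
    ∃ (p : ℤ) (q : ℕ), 2 ≤ q ∧ N ≤ q ∧ IsCoprime p (q : ℤ) ∧ a < (p : ℝ) / q ∧
      (p : ℝ) / q + φ q < b := by
  obtain ⟨r, hr1, hr2⟩ := exists_rat_btwn hab
  obtain ⟨M, hM⟩ := exists_nat_gt (2 / (b - r))
  have hrb : 0 < b - (r : ℝ) := by linarith
  have hcop : IsCoprime r.num (r.den : ℤ) := Rat.isCoprime_num_den r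
  obtain ⟨u, v, huv⟩ := hcop
  set K : ℕ := u.natAbs + M + N + 2 with hK
  have hden : (1 : ℤ) ≤ r.den := by exact_mod_cast r.pos
  have hge : (M + N + 2 : ℤ) ≤ -u + K * r.den := by
    have h1 : (u : ℤ) ≤ u.natAbs := Int.le_natAbs
    have : (K : ℤ) ≤ K * r.den := by nlinarith [Int.natCast_nonneg K]
    have h2 : (K : ℤ) = u.natAbs + M + N + 2 := by rw [hK]; push_cast; rfl
    linarith
  obtain ⟨q, hq⟩ : ∃ q : ℕ, (q : ℤ) = -u + K * r.den :=
    ⟨_, Int.toNat_of_nonneg (by linarith [Int.natCast_nonneg M, Int.natCast_nonneg N])⟩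
  have hq' : M + N + 2 ≤ q := by
    rw [← hq] at hge; exact_mod_cast hge
  have hd : (v + K * r.num) * r.den - r.num * q = 1 := by rw [hq]; linear_combination huv
  have hq0 : (0 : ℝ) < q := by
    have : 0 < q := by omega
    exact_mod_cast this
  have hd0 : (1 : ℝ) ≤ r.den := by exact_mod_cast hden
  have e : ((v + K * r.num : ℤ) : ℝ) / q = r + 1 / (r.den * q) := by
    have hdr : ((v + K * r.num : ℤ) : ℝ) * r.den - r.num * q = 1 := by exact_mod_cast hd
    have : (r : ℝ) = r.num / r.den := by rw [Rat.cast_def]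
    rw [this]
    field_simp
    linarith
  refine ⟨v + K * r.num, q, by omega, by omega, ⟨r.den, -r.num, by linarith⟩, ?_, ?_⟩
  · rw [e]
    have : 0 < 1 / ((r.den : ℝ) * q) := by positivity
    linarith
  · rw [e]
    have h1 := hφ q (by omega)
    have hM' : (M : ℝ) ≤ q := by
      have : M ≤ q := by omega
      exact_mod_cast this
    have hq1 : (1 : ℝ) ≤ q := by
      have : 1 ≤ q := by omega
      exact_mod_cast this
    have h2 : 1 / ((r.den : ℝ) * q) ≤ 1 / q := by
      apply one_div_le_one_div_of_le hq0; nlinarith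
    have h3 : 1 / (2 * (q : ℝ) ^ 4) ≤ 1 / q := by
      apply one_div_le_one_div_of_le hq0
      have : (q : ℝ) ^ 1 ≤ q ^ 4 := pow_le_pow_right₀ hq1 (by norm_num)
      simp only [pow_one] at this
      linarith
    have h4 : 2 / (q : ℝ) < b - r := by
      have : 2 / (b - r) < (q : ℝ) := by linarith
      rw [div_lt_iff₀ hrb] at this
      rw [div_lt_iff₀ hq0]
      linarith
    have : 2 / (q : ℝ) = 1 / q + 1 / q := by ring
    linarith

theorem pj_core (φ : ℕ → ℝ) (N : ℕ) (hpos : ∀ q, 0 < φ q)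
    (hφ : ∀ q : ℕ, N ≤ q → φ q ≤ 1 / (2 * (q : ℝ) ^ 4)) (a b : ℝ) (hab : a < b) (s : ℕ → ℝ) :
    ∃ (ζ : ℝ) (p : ℕ → ℤ) (q : ℕ → ℕ), StrictMono q ∧ (∀ n, 2 ≤ q n) ∧ (∀ n, N ≤ q n) ∧
      (∀ n, IsCoprime (p n) (q n : ℤ)) ∧ a < ζ ∧ ζ < b ∧ (∀ n, ζ ≠ s n) ∧
      (∀ n, a < (p n : ℝ) / q n) ∧ (∀ n, ζ ≤ (p n : ℝ) / q n + φ (q n)) ∧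
      (∀ n, (p n : ℝ) / q n + 1 / (q n * q (n + 1)) ≤ ζ) ∧
      (∀ n, (q n : ℝ) * φ (q n) * q (n + 1) ≤ 1 + 3 * (q n : ℝ) ^ 2 * φ (q n)) := by
  let St := {x : ℤ × ℕ // 2 ≤ x.2 ∧ N ≤ x.2 ∧ IsCoprime x.1 (x.2 : ℤ)}
  have hstep : ∀ (n : ℕ) (x : St), ∃ y : St, y.1.1 * x.1.2 - x.1.1 * y.1.2 = 1 ∧ x.1.2 < y.1.2 ∧
      (x.1.2 : ℝ) * φ x.1.2 * y.1.2 ≤ 1 + 3 * (x.1.2 : ℝ) ^ 2 * φ x.1.2 ∧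
      (y.1.1 : ℝ) / y.1.2 + φ y.1.2 ≤ (x.1.1 : ℝ) / x.1.2 + φ x.1.2 ∧
      s n ∉ Icc ((y.1.1 : ℝ) / y.1.2) ((y.1.1 : ℝ) / y.1.2 + φ y.1.2) := by
    rintro n ⟨⟨p, q⟩, h2, hN, hc⟩
    obtain ⟨p', q', h⟩ := pj_step φ N hpos hφ p q h2 hN hc (s n)
    have hlt := h.2.1
    dsimp only at h2 hN hc
    refine ⟨⟨(p', q'), by dsimp only; omega, by dsimp only; omega, ⟨q, -p, ?_⟩⟩, h⟩
    dsimp only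
    linarith [h.1]
  choose F hF using hstep
  obtain ⟨p0, q0, h2, hN, hc, h0a, h0b⟩ := pj_start φ N hpos hφ a b hab
  let f : ℕ → St := fun n => Nat.rec ⟨(p0, q0), h2, hN, hc⟩ (fun n x => F n x) n
  have hf : ∀ n, f (n + 1) = F n (f n) := fun n => rfl
  let L : ℕ → ℝ := fun n => ((f n).1.1 : ℝ) / (f n).1.2
  let R : ℕ → ℝ := fun n => ((f n).1.1 : ℝ) / (f n).1.2 + φ (f n).1.2
  have hLR : ∀ n, L n ≤ R n := fun n => by
    have := hpos (f n).1.2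
    simp only [L, R]; linarith
  have hq0 : ∀ n, (0 : ℝ) < (f n).1.2 := fun n => by
    have := (f n).2.1
    have : 0 < (f n).1.2 := by omega
    exact_mod_cast this
  have hLe : ∀ n, L (n + 1) = L n + 1 / ((f n).1.2 * (f (n + 1)).1.2) := fun n => by
    have h := (hF n (f n)).1
    rw [← hf] at h
    have hdr : ((f (n + 1)).1.1 : ℝ) * (f n).1.2 - (f n).1.1 * (f (n + 1)).1.2 = 1 := by
      exact_mod_cast h
    have := hq0 n
    have := hq0 (n + 1)
    simp only [L]
    field_simp
    linarith
  have hLm : Monotone L := monotone_nat_of_le_succ fun n => by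
    rw [hLe]
    have : 0 < 1 / (((f n).1.2 : ℝ) * (f (n + 1)).1.2) := by
      have := hq0 n
      have := hq0 (n + 1)
      positivity
    linarith
  have hRm : Antitone R := antitone_nat_of_succ_le fun n => by
    have h := (hF n (f n)).2.2.2.1
    rw [← hf] at h
    exact h
  have hmem := ciSup_mem_iInter_Icc_of_antitone_Icc (f := L) (g := R)
    (antitone_nat_of_succ_le fun n => Icc_subset_Icc (hLm (Nat.le_succ n)) (hRm (Nat.le_succ n)))
    hLR
  set ζ := ⨆ n, L n
  rw [mem_iInter] at hmem
  have hL0 : L 0 = (p0 : ℝ) / q0 := rfl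
  have hR0 : R 0 = (p0 : ℝ) / q0 + φ q0 := rfl
  refine ⟨ζ, fun n => (f n).1.1, fun n => (f n).1.2, ?_, fun n => (f n).2.1, fun n => (f n).2.2.1,
    fun n => (f n).2.2.2, ?_, ?_, ?_, ?_, fun n => (hmem n).2, ?_, ?_⟩
  · refine strictMono_nat_of_lt_succ fun n => ?_
    have h := (hF n (f n)).2.1
    rw [← hf] at h
    exact h
  · linarith [(hmem 0).1]
  · linarith [(hmem 0).2]
  · intro n hn
    have h := (hF n (f n)).2.2.2.2
    rw [← hf, ← hn] at h
    exact h (hmem (n + 1))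
  · intro n
    have : L 0 ≤ L n := hLm (Nat.zero_le n)
    change a < L n
    linarith
  · intro n
    have := (hmem (n + 1)).1
    rw [hLe] at this
    exact this
  · intro n
    have h := (hF n (f n)).2.2.1
    rw [← hf] at h
    exact h

theorem pj_coprime_eq (P p : ℤ) (Q q : ℕ) (h1 : IsCoprime P (Q : ℤ)) (h2 : IsCoprime p (q : ℤ))
    (h : P * q = p * Q) : Q = q := by
  apply Nat.dvd_antisymm
  · have : (Q : ℤ) ∣ P * q := ⟨p, by linarith⟩
    exact_mod_cast h1.symm.dvd_of_dvd_mul_left this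
  · have : (q : ℤ) ∣ p * Q := ⟨P, by linarith⟩
    exact_mod_cast h2.symm.dvd_of_dvd_mul_left this

theorem pj_sep (P p : ℤ) (Q q : ℕ) (hQ : 0 < Q) (hq : 0 < q) (h : P * q ≠ p * Q) (ζ x y : ℝ)
    (hx : |ζ - (P : ℝ) / Q| ≤ x) (hy : |ζ - (p : ℝ) / q| ≤ y) : 1 ≤ (Q : ℝ) * q * (x + y) := by
  have h1 : (1 : ℤ) ≤ |P * q - p * Q| := Int.one_le_abs (sub_ne_zero.mpr h)
  have h2 : (1 : ℝ) ≤ |(P : ℝ) * q - p * Q| := by exact_mod_cast h1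
  have hQ' : (0 : ℝ) < Q := by exact_mod_cast hQ
  have hq' : (0 : ℝ) < q := by exact_mod_cast hq
  have e : (P : ℝ) * q - p * Q = Q * q * ((ζ - p / q) - (ζ - P / Q)) := by
    field_simp
    ring
  rw [e, abs_mul, abs_of_pos (by positivity : (0 : ℝ) < Q * q)] at h2
  refine h2.trans ?_
  gcongr
  refine (abs_sub _ _).trans ?_
  linarith

theorem pj_legendre (φ : ℕ → ℝ) (N : ℕ) (hpos : ∀ q, 0 < φ q)
    (hφ : ∀ q : ℕ, N ≤ q → φ q ≤ 1 / (2 * (q : ℝ) ^ 4)) (ζ : ℝ) (p : ℕ → ℤ) (q : ℕ → ℕ)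
    (hmono : StrictMono q) (h2 : ∀ n, 2 ≤ q n) (hN : ∀ n, N ≤ q n)
    (hcop : ∀ n, IsCoprime (p n) (q n : ℤ))
    (happ : ∀ n, |ζ - (p n : ℝ) / q n| ≤ φ (q n))
    (hnext : ∀ n, (q n : ℝ) * φ (q n) * q (n + 1) ≤ 1 + 3 * (q n : ℝ) ^ 2 * φ (q n))
    (P : ℤ) (Q : ℕ) (hc : IsCoprime P (Q : ℤ)) (n : ℕ) (hQ1 : q n ≤ Q) (hQ2 : Q < q (n + 1))
    (hP : |ζ - (P : ℝ) / Q| ≤ φ Q) : P * q n = p n * Q := by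
  by_contra hne
  have hqn := h2 n
  have hNn := hN n
  have hQr : (2 : ℝ) ≤ Q := by exact_mod_cast hqn.trans hQ1
  have hQq : (q n : ℝ) ≤ Q := by exact_mod_cast hQ1
  have hQq' : (Q : ℝ) < q (n + 1) := by exact_mod_cast hQ2
  have hq2 : (2 : ℝ) ≤ q n := by exact_mod_cast hqn
  have hfQ := hφ Q (by omega)
  have hfq := hφ (q n) hNn
  have hfq' := hφ (q (n + 1)) (hN _)
  have hn := hnext n
  generalize hA : (q (n + 1) : ℝ) = A at *
  generalize hB : (Q : ℝ) = B at *
  generalize hC : (q n : ℝ) = C at *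
  have hA0 : 0 < A := by linarith
  have hB0 : 0 < B := by linarith
  have hC0 : 0 < C := by linarith
  by_cases hcase : A < B ^ 3
  · have hne' : P * q (n + 1) ≠ p (n + 1) * Q := fun h => by
      have := pj_coprime_eq _ _ _ _ hc (hcop (n + 1)) h
      omega
    have h := pj_sep P (p (n + 1)) Q (q (n + 1)) (by omega) (by omega) hne' ζ (φ Q) _
      (by rw [hB]; exact hP) (happ _)
    rw [hA, hB] at h
    have h3 : B * A * (φ Q + φ (q (n + 1))) ≤ B * A * (1 / (2 * B ^ 4) + 1 / (2 * A ^ 4)) := by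
      gcongr
    have e : B * A * (1 / (2 * B ^ 4) + 1 / (2 * A ^ 4)) = A / (2 * B ^ 3) + B / (2 * A ^ 3) := by
      field_simp
    have h4 : A / (2 * B ^ 3) < 1 / 2 := by
      rw [div_lt_div_iff₀ (by positivity) (by positivity)]; linarith
    have h5 : B / (2 * A ^ 3) ≤ 1 / 2 := by
      rw [div_le_div_iff₀ (by positivity) (by positivity)]
      have : A ^ 1 ≤ A ^ 3 := pow_le_pow_right₀ (by linarith) (by norm_num)
      simp only [pow_one] at this
      linarith
    linarith
  · push Not at hcase
    have hp := happ n
    rw [hC] at hp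
    have h := pj_sep P (p n) Q (q n) (by omega) (by omega) hne ζ (φ Q) (φ (q n))
      (by rw [hB]; exact hP) (by rw [hC]; exact hp)
    rw [hB, hC] at h
    have h3 : C * φ (q n) * A ≤ 2 := by
      have : 3 * C ^ 2 * φ (q n) ≤ 3 * C ^ 2 * (1 / (2 * C ^ 4)) := by gcongr
      have e : 3 * C ^ 2 * (1 / (2 * C ^ 4)) = 3 / (2 * C ^ 2) := by field_simp
      have : 3 / (2 * C ^ 2) ≤ 1 := by
        rw [div_le_one (by positivity)]; nlinarith
      linarith
    have hcf : 0 < C * φ (q n) := mul_pos hC0 (hpos _)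
    have h4 : C * φ (q n) * B ^ 3 ≤ 2 := le_trans (by gcongr) h3
    have h5 : C * φ (q n) * B ≤ 1 / 2 := by
      have : C * φ (q n) * B * 4 ≤ C * φ (q n) * B * B ^ 2 := by
        gcongr; nlinarith
      nlinarith
    have h6 : B * C * φ Q ≤ 1 / 8 := by
      have h7 : B * C * φ Q ≤ B * B * (1 / (2 * B ^ 4)) := by
        have := (hpos Q).le
        gcongr
      have e : B * B * (1 / (2 * B ^ 4)) = 1 / (2 * B ^ 2) := by field_simp
      have : 1 / (2 * B ^ 2) ≤ 1 / 8 := by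
        apply one_div_le_one_div_of_le (by norm_num); nlinarith
      linarith
    nlinarith

/-- Simultaneous approximations come from rationals `P/Q` with `Q^k ∣ q`. -/
theorem pj_reduce (k : ℕ) (hk : 1 ≤ k) (ζ : ℝ) (hζ : |ζ| < 1 / 2) (q : ℕ) (hq : 1 ≤ q)
    (pp : Fin k → ℤ) (e : ℝ) (he : e < 1 / (2 * (q : ℝ)))
    (hq2 : 1 / (2 * (q : ℝ) ^ 2) ≤ 1 / 2 - |ζ|)
    (h : ∀ j : Fin k, |(q : ℝ) * ζ ^ ((j : ℕ) + 1) - (pp j : ℝ)| ≤ e) :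
    ∃ (P : ℤ) (Q l : ℕ), 1 ≤ Q ∧ 1 ≤ l ∧ IsCoprime P (Q : ℤ) ∧ q = l * Q ^ k ∧
      q * |ζ - (P : ℝ) / Q| ≤ e := by
  have hq0 : (0 : ℝ) < q := by exact_mod_cast hq
  set r : ℚ := (pp ⟨0, hk⟩ : ℚ) / q with hr
  have hrr : (r : ℝ) = (pp ⟨0, hk⟩ : ℝ) / q := by rw [hr]; push_cast; rfl
  have hrd : (r : ℝ) = (r.num : ℝ) / r.den := by rw [Rat.cast_def]
  have h1 : (q : ℝ) * |ζ - r| ≤ e := by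
    have := h ⟨0, hk⟩
    simp only [zero_add, pow_one] at this
    have e1 : (q : ℝ) * ζ - pp ⟨0, hk⟩ = q * (ζ - r) := by rw [hrr]; field_simp
    rwa [e1, abs_mul, abs_of_pos hq0] at this
  have hr2 : |(r : ℝ)| ≤ 1 / 2 := by
    have h3 : |ζ - r| ≤ 1 / (2 * (q : ℝ) ^ 2) := by
      have h4 : (q : ℝ) * |ζ - r| ≤ 1 / (2 * q) := by linarith
      have e2 : 1 / (2 * (q : ℝ) ^ 2) = 1 / (2 * q) / q := by field_simp
      rw [e2, le_div_iff₀ hq0]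
      linarith
    have h5 : |(r : ℝ)| ≤ |ζ| + |ζ - r| := by
      have : (r : ℝ) = ζ - (ζ - r) := by ring
      calc |(r : ℝ)| = |ζ - (ζ - r)| := by rw [← this]
        _ ≤ _ := abs_sub _ _
    linarith
  have hdd : r.den ∣ q := by
    have : (r.den : ℤ) ∣ (q : ℤ) := by
      have := Rat.den_dvd (pp ⟨0, hk⟩) (q : ℤ)
      rw [hr]
      exact_mod_cast this
    exact_mod_cast this
  have hdle : r.den ≤ q := Nat.le_of_dvd hq hdd
  have hd0 : (0 : ℝ) < r.den := by exact_mod_cast r.pos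
  have hcop := Rat.isCoprime_num_den r
  have key : ∀ j, j ≤ k → r.den ^ j ∣ q := by
    intro j
    induction j with
    | zero => simp
    | succ j ih =>
      intro hj
      obtain ⟨m, hm⟩ := ih (by omega)
      have hh := h ⟨j, hj⟩
      simp only at hh
      have h6 := pj_pow_sub ζ r hζ.le hr2 j
      have h7 : |(q : ℝ) * ζ ^ (j + 1) - q * (r : ℝ) ^ (j + 1)| ≤ e := by
        rw [← mul_sub, abs_mul, abs_of_pos hq0]
        exact le_trans (by gcongr) h1
      have h8 : |(q : ℝ) * (r : ℝ) ^ (j + 1) - pp ⟨j, hj⟩| < 1 / q := by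
        have e3 : (q : ℝ) * (r : ℝ) ^ (j + 1) - pp ⟨j, hj⟩ =
          ((q : ℝ) * ζ ^ (j + 1) - pp ⟨j, hj⟩) -
            ((q : ℝ) * ζ ^ (j + 1) - q * (r : ℝ) ^ (j + 1)) := by ring
        have e4 : 1 / (q : ℝ) = 1 / (2 * q) + 1 / (2 * q) := by field_simp; norm_num
        rw [e3, e4]
        refine (abs_sub _ _).trans_lt ?_
        linarith
      have e5 : (q : ℝ) * (r : ℝ) ^ (j + 1) - pp ⟨j, hj⟩ =
          ((m * r.num ^ (j + 1) - r.den * pp ⟨j, hj⟩ : ℤ) : ℝ) / r.den := by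
        have : (q : ℝ) = r.den ^ j * m := by exact_mod_cast hm
        rw [this, hrd, div_pow]
        push_cast
        field_simp
        ring
      have h9 : |((m * r.num ^ (j + 1) - r.den * pp ⟨j, hj⟩ : ℤ) : ℝ)| < 1 := by
        rw [e5, abs_div, abs_of_pos hd0, div_lt_div_iff₀ hd0 hq0] at h8
        have h10 : (r.den : ℝ) ≤ q := by exact_mod_cast hdle
        nlinarith [abs_nonneg ((m * r.num ^ (j + 1) - r.den * pp ⟨j, hj⟩ : ℤ) : ℝ)]
      have h11 : (m * r.num ^ (j + 1) - r.den * pp ⟨j, hj⟩ : ℤ) = 0 := by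
        apply Int.abs_lt_one_iff.mp
        exact_mod_cast h9
      have h12 : (r.den : ℤ) ∣ m * r.num ^ (j + 1) := ⟨pp ⟨j, hj⟩, by linarith⟩
      have h13 : (r.den : ℤ) ∣ (m : ℤ) :=
        (hcop.symm.pow_right).dvd_of_dvd_mul_right h12
      have h14 : r.den ∣ m := by exact_mod_cast h13
      rw [hm, pow_succ]
      exact Nat.mul_dvd_mul_left _ h14
  obtain ⟨l, hl⟩ := key k le_rfl
  refine ⟨r.num, r.den, l, r.pos, ?_, hcop, by rw [hl]; ring, by rw [← hrd]; exact h1⟩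
  rcases Nat.eq_zero_or_pos l with h0 | h0
  · rw [h0] at hl; omega
  · exact h0

theorem pj_finite (k : ℕ) (Ψ : ℕ → ℝ) (ζ : ℝ) (hζ : |ζ| ≤ 1) (C : ℝ)
    (hΨ : ∀ q : ℕ, 1 ≤ q → Ψ q ≤ q * C) (hC : 0 ≤ C)
    (hinf : {qp : ℕ × (Fin k → ℤ) | 1 ≤ qp.1 ∧
      ∀ j : Fin k, |(qp.1 : ℝ) * ζ ^ ((j : ℕ) + 1) - (qp.2 j : ℝ)| ≤ Ψ qp.1}.Infinite) (M : ℕ) :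
    ∃ (q : ℕ) (pp : Fin k → ℤ), M ≤ q ∧ 1 ≤ q ∧
      ∀ j : Fin k, |(q : ℝ) * ζ ^ ((j : ℕ) + 1) - (pp j : ℝ)| ≤ Ψ q := by
  by_contra hcon
  push Not at hcon
  apply hinf
  obtain ⟨B, hB⟩ := exists_nat_gt (M * (1 + C))
  refine ((Set.finite_Iio M).prod
    (Set.finite_Icc (fun _ : Fin k => -(B : ℤ)) (fun _ => (B : ℤ)))).subset ?_
  rintro ⟨q, pp⟩ ⟨h1, h2⟩
  dsimp only at h1 h2
  have hqM : q < M := by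
    by_contra hge
    push Not at hge
    obtain ⟨j, hj⟩ := hcon q pp hge h1
    linarith [h2 j]
  have hb : ∀ j, |pp j| ≤ (B : ℤ) := by
    intro j
    have h3 := h2 j
    have h4 := hΨ q h1
    have h5 : |(q : ℝ) * ζ ^ ((j : ℕ) + 1)| ≤ q := by
      rw [abs_mul, abs_pow, Nat.abs_cast]
      have := pow_le_one₀ (n := (j : ℕ) + 1) (abs_nonneg ζ) hζ
      have hq0 : (0 : ℝ) ≤ q := Nat.cast_nonneg q
      nlinarith
    have h6 : |(pp j : ℝ)| ≤ q + q * C := by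
      have e : (pp j : ℝ) = q * ζ ^ ((j : ℕ) + 1) - (q * ζ ^ ((j : ℕ) + 1) - pp j) := by ring
      rw [e]
      refine (abs_sub _ _).trans ?_
      linarith
    have h7 : (q : ℝ) ≤ M := by exact_mod_cast hqM.le
    have h8 : |(pp j : ℝ)| ≤ B := by nlinarith
    exact_mod_cast h8
  exact ⟨hqM, fun j => (abs_le.mp (hb j)).1, fun j => (abs_le.mp (hb j)).2⟩

/-- For `k ≥ 2`, `Ψ` positive with `Ψ(x) < 1/(2x)` for large `x` and `Ψ(l·x) ≤ l·Ψ(x)`,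
and any non-empty open interval `(a, b) ⊆ (-1/2, 1/2)`, the set
`(𝒦_k(Ψ) \ ⋃_{0<c<1} 𝒦_k(cΨ)) ∩ (a, b)` is uncountable. -/
theorem powers_jarnik_first (k : ℕ) (hk : 2 ≤ k)
    (Ψ : ℕ → ℝ) (hpos : ∀ q, 0 < Ψ q)
    (hA3 : ∃ N : ℕ, ∀ x : ℕ, N ≤ x → Ψ x < 1 / (2 * (x : ℝ)))
    (hB2 : ∀ l x : ℕ, 1 ≤ l → 1 ≤ x → Ψ (l * x) ≤ (l : ℝ) * Ψ x)
    (a b : ℝ) (ha : -(1 / 2) ≤ a) (hab : a < b) (hb : b ≤ 1 / 2) :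
    ¬ ((Kk k Ψ \ ⋃ c ∈ Ioo (0 : ℝ) 1, Kk k (fun x => c * Ψ x)) ∩ Ioo a b).Countable := by
  intro hcount
  obtain ⟨N₀, hN₀⟩ := hA3
  set S := (Kk k Ψ \ ⋃ c ∈ Ioo (0 : ℝ) 1, Kk k (fun x => c * Ψ x)) ∩ Ioo a b with hS
  have hT : (S ∪ {x : ℝ | IsAlgebraic ℤ x}).Countable := hcount.union (Algebraic.countable ℤ ℝ)
  obtain ⟨s, hs⟩ := hT.exists_eq_range ⟨0, Or.inr isAlgebraic_zero⟩
  -- the one-dimensional approximation function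
  let φ : ℕ → ℝ := fun q => if q = 0 then 1 else Ψ (q ^ k) / (q : ℝ) ^ k
  have hφd : ∀ q : ℕ, 1 ≤ q → φ q = Ψ (q ^ k) / (q : ℝ) ^ k := fun q hq => by
    have : q ≠ 0 := by omega
    simp [φ, this]
  have hφpos : ∀ q, 0 < φ q := fun q => by
    by_cases h : q = 0
    · simp [φ, h]
    · have h1 : 0 < q := Nat.pos_of_ne_zero h
      have h2 : (0 : ℝ) < q := by exact_mod_cast h1
      have := hpos (q ^ k)
      rw [hφd q h1]
      positivity
  set N := N₀ + 1 with hN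
  have hφ : ∀ q : ℕ, N ≤ q → φ q ≤ 1 / (2 * (q : ℝ) ^ 4) := fun q hq => by
    have h1 : 1 ≤ q := by omega
    have h1r : (1 : ℝ) ≤ q := by exact_mod_cast h1
    have h2 : q ≤ q ^ k := Nat.le_self_pow (by omega) q
    have h3 := hN₀ (q ^ k) (by omega)
    push_cast at h3
    rw [hφd q h1, div_le_iff₀ (by positivity)]
    have h4 : (q : ℝ) ^ 2 ≤ q ^ k := pow_le_pow_right₀ h1r hk
    refine h3.le.trans ?_
    rw [one_div_mul_eq_div, div_le_div_iff₀ (by positivity) (by positivity)]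
    have h5 : (q : ℝ) ^ 2 * q ^ 2 ≤ q ^ k * q ^ k := by gcongr
    nlinarith
  obtain ⟨ζ, p, q, hmono, h2, hNq, hcop, haζ, hζb, hζs, hap, hup, hlow, hnext⟩ :=
    pj_core φ N hφpos hφ a b hab s
  have hnot : ζ ∉ S ∪ {x : ℝ | IsAlgebraic ℤ x} := by
    rw [hs]
    rintro ⟨n, hn⟩
    exact hζs n hn.symm
  have hnalg : ¬ IsAlgebraic ℤ ζ := fun h => hnot (Or.inr h)
  have hpoly : ∀ P : Polynomial ℤ, P ≠ 0 → P.natDegree ≤ k → (Polynomial.aeval ζ) P ≠ 0 :=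
    fun P hP _ h => hnalg ⟨P, hP, h⟩
  have hirr : Irrational ζ := by
    rintro ⟨r, hr⟩
    apply hnalg
    rw [← hr]
    exact (IsFractionRing.isAlgebraic_iff ℤ ℚ ℝ).mpr (isAlgebraic_algebraMap (R := ℚ) (A := ℝ) r)
  have hζ : |ζ| < 1 / 2 := abs_lt.mpr ⟨by linarith, by linarith⟩
  have hq0 : ∀ n, (0 : ℝ) < q n := fun n => by
    have := h2 n
    have : 0 < q n := by omega
    exact_mod_cast this
  have hpos1 : ∀ n, 0 < 1 / ((q n : ℝ) * q (n + 1)) := fun n => by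
    have := hq0 n
    have := hq0 (n + 1)
    positivity
  have happ : ∀ n, |ζ - (p n : ℝ) / q n| ≤ φ (q n) := fun n => by
    rw [abs_of_nonneg] <;> linarith [hup n, hlow n, hpos1 n]
  apply hnot
  left
  refine ⟨⟨⟨hpoly, ?_⟩, ?_⟩, haζ, hζb⟩
  · -- infinitely many good approximations
    let g : ℕ → ℕ × (Fin k → ℤ) := fun n =>
      (q n ^ k, fun j => p n ^ ((j : ℕ) + 1) * (q n : ℤ) ^ (k - ((j : ℕ) + 1)))
    have hg : Function.Injective g := by
      intro m n hmn
      have h3 : q m ^ k = q n ^ k := congrArg Prod.fst hmn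
      exact hmono.injective (Nat.pow_left_injective (by omega) h3)
    refine (Set.infinite_range_of_injective hg).mono ?_
    rintro _ ⟨n, rfl⟩
    have hq1 : 1 ≤ q n := by have := h2 n; omega
    refine ⟨Nat.one_le_pow _ _ hq1, fun j => ?_⟩
    have hqn := hq0 n
    have hpq : |(p n : ℝ) / q n| ≤ 1 / 2 :=
      abs_le.mpr ⟨by linarith [hap n], by linarith [hlow n, hpos1 n]⟩
    have h3 := pj_pow_sub ζ _ hζ.le hpq j
    have h4 := happ n
    rw [hφd _ hq1, le_div_iff₀ (by positivity)] at h4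
    simp only [g]
    push_cast
    have e : (q n : ℝ) ^ k * ζ ^ ((j : ℕ) + 1)
        - (p n : ℝ) ^ ((j : ℕ) + 1) * (q n : ℝ) ^ (k - ((j : ℕ) + 1))
        = (q n : ℝ) ^ k * (ζ ^ ((j : ℕ) + 1) - ((p n : ℝ) / q n) ^ ((j : ℕ) + 1)) := by
      have e1 : (q n : ℝ) ^ k = (q n : ℝ) ^ ((j : ℕ) + 1) * (q n : ℝ) ^ (k - ((j : ℕ) + 1)) := by
        rw [← pow_add]
        congr 1
        have := j.2
        omega
      rw [e1, div_pow]
      field_simp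
    rw [e, abs_mul, abs_of_pos (by positivity : (0 : ℝ) < (q n : ℝ) ^ k)]
    refine le_trans ?_ h4
    rw [mul_comm]
    gcongr
  · -- optimality of the constant
    simp only [mem_iUnion, not_exists]
    rintro c ⟨hc0, hc1⟩ ⟨-, hinf⟩
    have hfin := pj_finite k (fun x => c * Ψ x) ζ (by linarith) (Ψ 1) (fun m hm => by
      have h3 := hB2 m 1 hm le_rfl
      rw [mul_one] at h3
      nlinarith [hpos m]) (hpos 1).le hinf
    -- threshold index
    obtain ⟨n₀, hn₀⟩ := exists_nat_gt (3 / (1 - c))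
    have hqn : ∀ n, n ≤ q n := fun n => hmono.id_le n
    -- separation from rationals with small denominators
    obtain ⟨δ, hδ, hδ0⟩ : ∃ δ : ℝ, (∀ m ≤ q n₀, ∀ z : ℤ, δ ≤ dist ζ (z / m)) ∧ 0 < δ := by
      have h3 := hirr.eventually_forall_le_dist_cast_div_of_denom_le (q n₀)
      have h4 : ∀ᶠ δ : ℝ in nhdsWithin 0 (Ioi 0), ∀ m ≤ q n₀, ∀ z : ℤ, δ ≤ dist ζ (z / m) :=
        h3.filter_mono nhdsWithin_le_nhds
      obtain ⟨δ, h5, h6⟩ := (h4.and self_mem_nhdsWithin).exists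
      exact ⟨δ, h5, h6⟩
    set η := min (1 / 2 - |ζ|) δ with hη
    have hη0 : 0 < η := lt_min (by linarith) hδ0
    obtain ⟨M, hM⟩ := exists_nat_gt (1 / η)
    obtain ⟨x, pp, hMx, hx1, hx⟩ := hfin (max M N)
    have hMx' : M ≤ x := (le_max_left _ _).trans hMx
    have hNx : N ≤ x := (le_max_right _ _).trans hMx
    have hxr : (1 : ℝ) ≤ x := by exact_mod_cast hx1
    have hΨx := hN₀ x (by omega)
    have hcΨ : c * Ψ x < 1 / (2 * (x : ℝ)) := by nlinarith [hpos x]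
    have hxη : 1 / (2 * (x : ℝ) ^ 2) < η := by
      have h3 : (M : ℝ) ≤ x := by exact_mod_cast hMx'
      have h4 : 1 / η < x := by linarith
      rw [div_lt_iff₀ hη0] at h4
      rw [div_lt_iff₀ (by positivity)]
      nlinarith
    obtain ⟨P, Q, l, hQ1, hl1, hPQ, hxl, hfin1⟩ :=
      pj_reduce k (by omega) ζ hζ x hx1 pp (c * Ψ x) hcΨ (hxη.le.trans (min_le_left _ _)) hx
    have hQr : (1 : ℝ) ≤ Q := by exact_mod_cast hQ1
    have hlr : (1 : ℝ) ≤ l := by exact_mod_cast hl1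
    -- one-dimensional approximation
    have hPφ : |ζ - (P : ℝ) / Q| ≤ c * φ Q := by
      have h3 := hB2 l (Q ^ k) hl1 (Nat.one_le_pow _ _ hQ1)
      rw [← hxl] at h3
      have h4 : (x : ℝ) = l * (Q : ℝ) ^ k := by exact_mod_cast hxl
      rw [hφd Q hQ1, ← mul_div_assoc, le_div_iff₀ (by positivity)]
      have h5 : (l : ℝ) * (|ζ - (P : ℝ) / Q| * (Q : ℝ) ^ k) ≤ l * (c * Ψ (Q ^ k)) := by
        calc (l : ℝ) * (|ζ - (P : ℝ) / Q| * (Q : ℝ) ^ k) = x * |ζ - (P : ℝ) / Q| := by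
              rw [h4]; ring
          _ ≤ c * Ψ x := hfin1
          _ ≤ c * (l * Ψ (Q ^ k)) := by gcongr
          _ = _ := by ring
      exact le_of_mul_le_mul_left h5 (by linarith)
    have hQbig : q n₀ < Q := by
      by_contra hle
      push Not at hle
      have h3 := hδ Q hle P
      rw [Real.dist_eq] at h3
      have h4 : |ζ - (P : ℝ) / Q| ≤ 1 / (2 * (x : ℝ) ^ 2) := by
        have e2 : 1 / (2 * (x : ℝ) ^ 2) = 1 / (2 * x) / x := by field_simp
        rw [e2, le_div_iff₀ (by linarith)]
        linarith
      have := min_le_right (1 / 2 - |ζ|) δ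
      linarith
    -- locate Q
    obtain ⟨n, hn1, hn2⟩ : ∃ n, q n ≤ Q ∧ Q < q (n + 1) := by
      have hex : ∃ m, Q < q m := ⟨Q + 1, lt_of_lt_of_le (Nat.lt_succ_self Q) (hqn _)⟩
      classical
      have h3 := Nat.find_spec hex
      have h4 : Nat.find hex ≠ 0 := fun h0 => by
        rw [h0] at h3
        have := hmono.monotone (Nat.zero_le n₀)
        omega
      obtain ⟨n, hn⟩ := Nat.exists_eq_succ_of_ne_zero h4
      refine ⟨n, ?_, by rw [hn] at h3; exact h3⟩
      have := Nat.find_min hex (m := n) (by omega)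
      omega
    have hnn : n₀ ≤ n := by
      by_contra hlt
      push Not at hlt
      have := hmono.monotone (show n + 1 ≤ n₀ by omega)
      omega
    have hPφ' : |ζ - (P : ℝ) / Q| ≤ φ Q := by nlinarith [hφpos Q]
    have heq := pj_legendre φ N hφpos hφ ζ p q hmono h2 hNq hcop happ hnext P Q hPQ n hn1 hn2 hPφ'
    have hQq := pj_coprime_eq _ _ _ _ hPQ (hcop n) heq
    subst hQq
    have hPp : P = p n := by
      have : (q n : ℤ) ≠ 0 := by omega
      exact mul_right_cancel₀ this heq
    rw [hPp] at hPφ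
    -- contradiction with the lower bound
    have h5 : 1 / ((q n : ℝ) * q (n + 1)) ≤ c * φ (q n) := by
      refine le_trans ?_ hPφ
      exact le_trans (by linarith [hlow n]) (le_abs_self _)
    have hA := hq0 n
    have hB := hq0 (n + 1)
    rw [div_le_iff₀ (by positivity)] at h5
    have h6 : 1 ≤ c * (1 + 3 * (q n : ℝ) ^ 2 * φ (q n)) := by
      calc (1 : ℝ) ≤ c * φ (q n) * (q n * q (n + 1)) := h5
        _ = c * (q n * φ (q n) * q (n + 1)) := by ring
        _ ≤ _ := by have := hnext n; gcongr
    have h7 : 3 * (q n : ℝ) ^ 2 * φ (q n) ≤ 3 / q n := by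
      have h8 : 3 * (q n : ℝ) ^ 2 * φ (q n) ≤ 3 * (q n : ℝ) ^ 2 * (1 / (2 * (q n : ℝ) ^ 4)) := by
        have := hφ (q n) (hNq n)
        gcongr
      refine h8.trans ?_
      have e : 3 * (q n : ℝ) ^ 2 * (1 / (2 * (q n : ℝ) ^ 4)) = 3 / (2 * (q n : ℝ) ^ 2) := by
        field_simp
      rw [e]
      apply div_le_div_of_nonneg_left (by norm_num) hA
      nlinarith
    have h9 : 3 / (q n : ℝ) < 1 - c := by
      have h10 : (n₀ : ℝ) ≤ q n := by exact_mod_cast hnn.trans (hqn n)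
      have h11 : 3 / (1 - c) < q n := by linarith
      rw [div_lt_iff₀ (by linarith)] at h11
      rw [div_lt_iff₀ hA]
      linarith
    nlinarith
end

section
/- Let k ≥ 2 be an integer and J ⊆ (0,∞) a non-empty bounded open interval. Set L_k(t) := max_{1≤j≤k} j·t^{j−1}, and let d be any constant with 0 < d < 1/(2·sup_{t∈J} L_k(t)). Let Ψ : ℕ → (0,∞) satisfy Ψ(x) < d/x for all sufficiently large x and Ψ(l·x) ≤ l·Ψ(x) for all positive integers l, x. Then for every fixed constant c₀ with 0 < c₀ < 1, the set (𝒦_k(Ψ) \ 𝒦_k(c₀Ψ)) ∩ J is uncountable. -/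
open Filter Set

/-- `Lk k t = max_{1≤j≤k} j·t^{j-1}`. -/
noncomputable def Lk (k : ℕ) (t : ℝ) : ℝ :=
  ⨆ j : Fin k, (((j : ℕ) : ℝ) + 1) * t ^ (j : ℕ)


lemma pj_lip {k : ℕ} {α β L : ℝ} (hα : 0 ≤ α)
    (hL : ∀ t ∈ Ioo α β, ∀ j < k, ((j : ℝ) + 1) * t ^ j ≤ L)
    {x y : ℝ} (hx : x ∈ Ioo α β) (hy : y ∈ Ioo α β) {j : ℕ} (hj : j < k) :
    |x ^ (j + 1) - y ^ (j + 1)| ≤ L * |x - y| := by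
  have h := abs_pow_sub_pow_le x y (j + 1)
  have hx0 : 0 < x := lt_of_le_of_lt hα hx.1
  have hy0 : 0 < y := lt_of_le_of_lt hα hy.1
  rw [abs_of_pos hx0, abs_of_pos hy0] at h
  have hm : max x y ∈ Ioo α β := by
    rcases max_choice x y with h | h <;> rw [h] <;> assumption
  have h2 := hL _ hm j hj
  simp only [Nat.add_sub_cancel] at h
  push_cast at h
  nlinarith [abs_nonneg (x - y)]

lemma pj_window {k : ℕ} (hk : 1 ≤ k) {α β L c₀ : ℝ} (hα : 0 ≤ α)
    (hL : ∀ t ∈ Ioo α β, ∀ j < k, ((j : ℝ) + 1) * t ^ j ≤ L) (hL1 : 1 ≤ L)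
    (hc0 : 0 < c₀) (hc1 : c₀ < 1) {r ψ : ℝ} (hr : r ∈ Ioo α β) (hψ : 0 < ψ)
    (hrψ : r + ψ < β) :
    ∃ u v, r ≤ u ∧ v ≤ r + ψ ∧ v - u = (1 - c₀) / (2 * L) * ψ ∧
      ∀ ζ ∈ Icc u v, (∀ j < k, |ζ ^ (j + 1) - r ^ (j + 1)| ≤ ψ) ∧
        ∃ j < k, c₀ * ψ < |ζ ^ (j + 1) - r ^ (j + 1)| := by
  have hr0 : 0 < r := lt_of_le_of_lt hα hr.1
  have hL0 : 0 < L := by linarith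
  -- choose a radius for which all powers are at most ψ and one equals ψ
  have hroot : ∀ j : Fin k, ∃ w, 0 ≤ w ∧ w ^ ((j : ℕ) + 1) = r ^ ((j : ℕ) + 1) + ψ := by
    intro j
    have h0 : 0 ≤ r ^ ((j : ℕ) + 1) + ψ := by positivity
    refine ⟨(r ^ ((j : ℕ) + 1) + ψ) ^ ((((j : ℕ) + 1 : ℕ) : ℝ)⁻¹), by positivity, ?_⟩
    exact Real.rpow_inv_natCast_pow h0 (by omega)
  choose w hw0 hw using hroot
  have : Nonempty (Fin k) := ⟨⟨0, hk⟩⟩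
  obtain ⟨i, hi⟩ := Finite.exists_min w
  have hvr : r < w i := by
    refine lt_of_pow_lt_pow_left₀ ((i : ℕ) + 1) (hw0 i) ?_
    rw [hw]; linarith
  have hv0 : w i ≤ r + ψ := by
    refine (hi ⟨0, hk⟩).trans ?_
    have := hw ⟨0, hk⟩
    simp at this
    exact this.le
  have hvJ : w i ∈ Ioo α β := ⟨by linarith [hr.1], by linarith⟩
  have hkey : ψ ≤ L * (w i - r) := by
    have h := pj_lip hα hL hvJ hr i.2
    rw [hw i, abs_of_pos (by linarith : 0 < w i - r)] at h
    simpa [abs_of_pos hψ] using h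
  have hκ : L * ((1 - c₀) / (2 * L) * ψ) = (1 - c₀) / 2 * ψ := by field_simp
  have hur : r < w i - (1 - c₀) / (2 * L) * ψ := by
    have : L * ((1 - c₀) / (2 * L) * ψ) < L * (w i - r) := by rw [hκ]; nlinarith
    have := lt_of_mul_lt_mul_left this hL0.le
    linarith
  refine ⟨w i - (1 - c₀) / (2 * L) * ψ, w i, hur.le, hv0, by ring, ?_⟩
  rintro ζ ⟨hζ1, hζ2⟩
  have hζr : r < ζ := by linarith
  have hζ0 : 0 < ζ := by linarith
  have hge : ∀ j : ℕ, 0 ≤ ζ ^ (j + 1) - r ^ (j + 1) := fun j =>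
    sub_nonneg.2 (pow_le_pow_left₀ hr0.le hζr.le _)
  constructor
  · intro j hj
    rw [abs_of_nonneg (hge j)]
    have h1 := hw ⟨j, hj⟩
    have h2 : ζ ^ (j + 1) ≤ w ⟨j, hj⟩ ^ (j + 1) :=
      pow_le_pow_left₀ hζ0.le (hζ2.trans (hi _)) _
    simp only at h1
    linarith
  · refine ⟨i, i.2, ?_⟩
    rw [abs_of_nonneg (hge i)]
    have hζJ : ζ ∈ Ioo α β := ⟨by linarith [hr.1], by linarith⟩
    have h := pj_lip hα hL hvJ hζJ i.2
    rw [abs_of_nonneg (by linarith : 0 ≤ w i - ζ), hw i] at h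
    have h3 := (le_abs_self _).trans h
    have h4 : L * (w i - ζ) ≤ L * ((1 - c₀) / (2 * L) * ψ) :=
      mul_le_mul_of_nonneg_left (by linarith) hL0.le
    rw [hκ] at h4
    nlinarith

lemma pj_odd (u : ℝ) (m : ℕ) :
    ∃ p : ℤ, Odd p ∧ u < p / 2 ^ m ∧ (p : ℝ) / 2 ^ m ≤ u + 2 / 2 ^ m := by
  have h2 : (0 : ℝ) < 2 ^ m := by positivity
  refine ⟨2 * ⌊(2 ^ m * u + 1) / 2⌋ + 1, ⟨_, rfl⟩, ?_, ?_⟩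
  · rw [lt_div_iff₀ h2]
    have := Int.lt_floor_add_one ((2 ^ m * u + 1) / 2)
    push_cast
    linarith
  · rw [div_le_iff₀ h2, add_mul, div_mul_cancel₀ _ h2.ne']
    have := Int.floor_le ((2 ^ m * u + 1) / 2)
    push_cast
    linarith

/-- relative size of the approximation -/
noncomputable def pjψ (k : ℕ) (Ψ : ℕ → ℝ) (b : ℕ) : ℝ := Ψ (b ^ k) / (b : ℝ) ^ k

/-- a state: the interval `[u,v]` consists of points with exact approximation by `p/2^m` -/
def PJGood (k : ℕ) (Ψ : ℕ → ℝ) (α β L c₀ : ℝ) (M : ℕ) (s : ℕ × ℤ × ℝ × ℝ) : Prop :=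
  M ≤ s.1 ∧ Odd s.2.1 ∧ α < s.2.2.1 ∧ s.2.2.2 < β ∧
  s.2.2.2 - s.2.2.1 = (1 - c₀) / (2 * L) * pjψ k Ψ (2 ^ s.1) ∧
  ∀ ζ ∈ Icc s.2.2.1 s.2.2.2,
    (∀ j < k, |ζ ^ (j + 1) - ((s.2.1 : ℝ) / 2 ^ s.1) ^ (j + 1)| ≤ pjψ k Ψ (2 ^ s.1)) ∧
    ∃ j < k, c₀ * pjψ k Ψ (2 ^ s.1) < |ζ ^ (j + 1) - ((s.2.1 : ℝ) / 2 ^ s.1) ^ (j + 1)|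

lemma pjψ_pos {k : ℕ} {Ψ : ℕ → ℝ} (hpos : ∀ q, 0 < Ψ q) {b : ℕ} (hb : 1 ≤ b) :
    0 < pjψ k Ψ b := by
  have : (0 : ℝ) < b := by exact_mod_cast hb
  exact div_pos (hpos _) (by positivity)

lemma pjψ_lt {k : ℕ} (hk : 2 ≤ k) {Ψ : ℕ → ℝ} {d : ℝ} (hd0 : 0 < d) (hd : d < 1 / 2) {N : ℕ}
    (hN : ∀ x : ℕ, N ≤ x → Ψ x < d / (x : ℝ)) {b : ℕ} (hb : 1 ≤ b) (hbN : N ≤ b) :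
    pjψ k Ψ b < 1 / (2 * (b : ℝ) ^ 4) := by
  have hb1 : (1 : ℝ) ≤ b := by exact_mod_cast hb
  have hb0 : (0 : ℝ) < b := by linarith
  have h := hN (b ^ k) (hbN.trans (Nat.le_self_pow (by omega) b))
  unfold pjψ
  have h4 : (b : ℝ) ^ 4 ≤ (b : ℝ) ^ k * (b : ℝ) ^ k := by
    rw [← pow_add]; exact pow_le_pow_right₀ hb1 (by omega)
  have hp : (0 : ℝ) < (b : ℝ) ^ k := by positivity
  push_cast at h
  calc Ψ (b ^ k) / (b : ℝ) ^ k < d / (b : ℝ) ^ k / (b : ℝ) ^ k := by gcongr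
    _ = d / ((b : ℝ) ^ k * (b : ℝ) ^ k) := by rw [div_div]
    _ ≤ d / (b : ℝ) ^ 4 := by gcongr
    _ ≤ (1 / 2) / (b : ℝ) ^ 4 := by gcongr
    _ = _ := by rw [div_div]

lemma pj_place {k : ℕ} (hk : 2 ≤ k) {α β L c₀ d : ℝ} {Ψ : ℕ → ℝ} (hα : 0 ≤ α)
    (hL : ∀ t ∈ Ioo α β, ∀ j < k, ((j : ℝ) + 1) * t ^ j ≤ L) (hL1 : 1 ≤ L)
    (hc0 : 0 < c₀) (hc1 : c₀ < 1) (hpos : ∀ q, 0 < Ψ q) (hd0 : 0 < d) (hd : d < 1 / 2) {N : ℕ}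
    (hN : ∀ x : ℕ, N ≤ x → Ψ x < d / (x : ℝ)) {M m : ℕ} (hM : N ≤ 2 ^ M) (hm : M ≤ m)
    {u v : ℝ} (hu : α ≤ u) (hv : v ≤ β) (huv : 4 / 2 ^ m ≤ v - u) :
    ∃ p u' v', PJGood k Ψ α β L c₀ M (m, p, u', v') ∧ u ≤ u' ∧ v' ≤ v := by
  obtain ⟨p, hp, hp1, hp2⟩ := pj_odd u m
  have h1 : 1 ≤ 2 ^ m := Nat.one_le_two_pow
  have h2 : N ≤ 2 ^ m := hM.trans (Nat.pow_le_pow_right (by norm_num) hm)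
  have hψ := pjψ_lt hk hd0 hd hN h1 h2
  have hψ0 : 0 < pjψ k Ψ (2 ^ m) := pjψ_pos hpos h1
  have h1' : (1 : ℝ) ≤ 2 ^ m := by exact_mod_cast h1
  have hψ' : pjψ k Ψ (2 ^ m) < 1 / 2 ^ m := by
    refine hψ.trans_le ?_
    push_cast
    apply one_div_le_one_div_of_le (by positivity)
    have : (2 : ℝ) ^ m ≤ ((2 : ℝ) ^ m) ^ 4 := le_self_pow₀ h1' (by norm_num)
    linarith
  have e4 : (4 : ℝ) / 2 ^ m = 4 * (1 / 2 ^ m) := by ring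
  have e2 : (2 : ℝ) / 2 ^ m = 2 * (1 / 2 ^ m) := by ring
  have e0 : (0 : ℝ) < 1 / 2 ^ m := by positivity
  rw [e4] at huv
  rw [e2] at hp2
  obtain ⟨u', v', a1, a2, a3, a4⟩ := pj_window (k := k) (by omega) hα hL hL1 hc0 hc1
    (r := (p : ℝ) / 2 ^ m) (ψ := pjψ k Ψ (2 ^ m)) ⟨by linarith, by linarith⟩ hψ0 (by linarith)
  exact ⟨p, u', v', ⟨hm, hp, by simp only; linarith, by simp only; linarith, a3, a4⟩,
    by linarith, by linarith⟩

lemma pj_step_s5 {k : ℕ} (hk : 2 ≤ k) {α β L c₀ d : ℝ} {Ψ : ℕ → ℝ} (hα : 0 ≤ α)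
    (hL : ∀ t ∈ Ioo α β, ∀ j < k, ((j : ℝ) + 1) * t ^ j ≤ L) (hL1 : 1 ≤ L)
    (hc0 : 0 < c₀) (hc1 : c₀ < 1) (hpos : ∀ q, 0 < Ψ q) (hd0 : 0 < d) (hd : d < 1 / 2) {N : ℕ}
    (hN : ∀ x : ℕ, N ≤ x → Ψ x < d / (x : ℝ)) {M : ℕ} (hM : N ≤ 2 ^ M)
    (hM2 : 192 / ((1 - c₀) / (2 * L)) ≤ 2 ^ M)
    (s : ℕ × ℤ × ℝ × ℝ) (hs : PJGood k Ψ α β L c₀ M s) (x : ℝ) :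
    ∃ s', PJGood k Ψ α β L c₀ M s' ∧ s.2.2.1 ≤ s'.2.2.1 ∧ s'.2.2.2 ≤ s.2.2.2 ∧
      x ∉ Icc s'.2.2.1 s'.2.2.2 ∧ s.1 < s'.1 ∧
      8 * (2 ^ s.1 * pjψ k Ψ (2 ^ s.1)) ^ 3 * 2 ^ s'.1 ≤ 1 := by
  obtain ⟨m, p, u, v⟩ := s
  obtain ⟨hm, hp, hu, hv, huv, hall⟩ := hs
  simp only at hm hp hu hv huv hall ⊢
  set κ := (1 - c₀) / (2 * L) with hκ
  have hκ0 : 0 < κ := div_pos (by linarith) (by linarith)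
  have hκ1 : κ ≤ 1 := by rw [hκ, div_le_one (by linarith)]; linarith
  have h1 : 1 ≤ 2 ^ m := Nat.one_le_two_pow
  have h2 : N ≤ 2 ^ m := hM.trans (Nat.pow_le_pow_right (by norm_num) hm)
  have hψ := pjψ_lt hk hd0 hd hN h1 h2
  have hψ0 : 0 < pjψ k Ψ (2 ^ m) := pjψ_pos hpos h1
  push_cast at hψ
  set ψ := pjψ k Ψ (2 ^ m)
  have hq1 : (1 : ℝ) ≤ 2 ^ m := by exact_mod_cast h1
  have hqM : 192 / κ ≤ 2 ^ m := hM2.trans (pow_le_pow_right₀ (by norm_num) hm)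
  set q : ℝ := 2 ^ m with hq
  have hq0 : 0 < q := by linarith
  rw [lt_div_iff₀ (by positivity)] at hψ
  rw [div_le_iff₀ hκ0] at hqM
  have hq4 : q ≤ q ^ 4 := le_self_pow₀ hq1 (by norm_num)
  have hψq : ψ * q ≤ 1 / 2 := by nlinarith
  have hψ1 : ψ ≤ 1 / 2 := by nlinarith
  have hκψ : 0 < κ * ψ := by positivity
  have hκψ1 : κ * ψ ≤ 1 / 2 := by nlinarith
  obtain ⟨n, hn1, hn2⟩ := exists_nat_pow_near (x := 12 / (κ * ψ)) (y := (2 : ℝ))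
    (by rw [le_div_iff₀ hκψ]; linarith) (by norm_num)
  have hn3 : (2 : ℝ) ^ (n + 1) * (κ * ψ) ≤ 24 := by
    rw [le_div_iff₀ hκψ] at hn1
    rw [pow_succ]; linarith
  rw [div_lt_iff₀ hκψ] at hn2
  have hmn : m < n + 1 := by
    have : q < (2 : ℝ) ^ (n + 1) := by
      by_contra hcon
      push Not at hcon
      have : (2 : ℝ) ^ (n + 1) * (κ * ψ) ≤ q * (κ * ψ) := by gcongr
      nlinarith
    exact (pow_lt_pow_iff_right₀ (by norm_num)).1 this
  have h4 : (4 : ℝ) / 2 ^ (n + 1) ≤ κ * ψ / 3 := by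
    rw [div_le_iff₀ (by positivity)]; linarith
  have hbound : 8 * (q * ψ) ^ 3 * 2 ^ (n + 1) ≤ 1 := by
    -- multiply by κ
    have e : 8 * (q * ψ) ^ 3 * 2 ^ (n + 1) * κ = 8 * q ^ 3 * ψ ^ 2 * (2 ^ (n + 1) * (κ * ψ)) := by
      ring
    have i1 : 8 * (q * ψ) ^ 3 * 2 ^ (n + 1) * κ ≤ 192 * (q ^ 3 * ψ ^ 2) := by
      rw [e]
      have : 8 * q ^ 3 * ψ ^ 2 * (2 ^ (n + 1) * (κ * ψ)) ≤ 8 * q ^ 3 * ψ ^ 2 * 24 := by gcongr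
      linarith
    have i2 : q ^ 3 * ψ ^ 2 * q ≤ 1 := by
      have : q ^ 3 * ψ ^ 2 * q = (ψ * q ^ 4) * ψ := by ring
      rw [this]
      nlinarith
    have i3 : 192 * (q ^ 3 * ψ ^ 2) ≤ κ := by
      have h0 : 0 ≤ q ^ 3 * ψ ^ 2 := by positivity
      have : q * κ * (q ^ 3 * ψ ^ 2) ≤ κ * 1 := by
        calc q * κ * (q ^ 3 * ψ ^ 2) = κ * (q ^ 3 * ψ ^ 2 * q) := by ring
          _ ≤ κ * 1 := by gcongr
      nlinarith
    have : 8 * (q * ψ) ^ 3 * 2 ^ (n + 1) * κ ≤ 1 * κ := by linarith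
    exact le_of_mul_le_mul_right this hκ0
  by_cases hx : x ≤ (u + v) / 2
  · obtain ⟨p', u', v', hg, ha, hb⟩ := pj_place hk hα hL hL1 hc0 hc1 hpos hd0 hd hN hM
      (m := n + 1) (by omega) (u := v - κ * ψ / 3) (v := v) (by linarith) hv.le (by linarith)
    refine ⟨_, hg, by simp only; linarith, hb, ?_, hmn, hbound⟩
    simp only
    intro hxx
    linarith [hxx.1]
  · obtain ⟨p', u', v', hg, ha, hb⟩ := pj_place hk hα hL hL1 hc0 hc1 hpos hd0 hd hN hM
      (m := n + 1) (by omega) (u := u) (v := u + κ * ψ / 3) hu.le (by linarith) (by linarith)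
    refine ⟨_, hg, ha, by simp only; linarith, ?_, hmn, hbound⟩
    simp only
    intro hxx
    linarith [hxx.2]

/-- A very good simultaneous approximation comes from a rational `a/b` with `b^k ∣ Q`. -/
lemma pj_div {k : ℕ} {α β L d : ℝ} (hα : 0 ≤ α)
    (hL : ∀ t ∈ Ioo α β, ∀ j < k, ((j : ℝ) + 1) * t ^ j ≤ L) (hd : d < 1 / 2)
    (hdL : d * L < 1 / 2) (hL1 : 1 ≤ L) {ζ : ℝ} (hζ : ζ ∈ Ioo α β) {Q : ℕ} (hQ : 1 ≤ Q) (p : ℕ → ℤ)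
    (r : ℚ) (hr : r = (p 0 : ℚ) / Q) (hrJ : (r : ℝ) ∈ Ioo α β) (hk : 1 ≤ k)
    (h : ∀ j < k, |(Q : ℝ) * ζ ^ (j + 1) - p j| ≤ d / Q) :
    ∀ j < k, r.den ^ (j + 1) ∣ Q ∧ (p j : ℝ) = Q * (r : ℝ) ^ (j + 1) := by
  have hQ0 : (0 : ℝ) < Q := by exact_mod_cast hQ
  have hQq : (Q : ℚ) ≠ 0 := by exact_mod_cast (by omega : Q ≠ 0)
  have hp0 : (p 0 : ℝ) = Q * (r : ℝ) := by
    rw [hr]; push_cast; field_simp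
  have hb0 : (0 : ℝ) < r.den := by exact_mod_cast r.den_pos
  have hrd : (r : ℝ) = r.num / r.den := by exact_mod_cast (Rat.num_div_den r).symm
  have hb1 : r.den ∣ Q := by
    have : r = Rat.divInt (p 0) Q := by rw [hr, Rat.divInt_eq_div]; simp
    have h2 := Rat.den_dvd (p 0) Q
    rw [← this] at h2
    exact_mod_cast h2
  have hbQ : (r.den : ℝ) ≤ Q := by exact_mod_cast Nat.le_of_dvd (by omega) hb1
  have hζr : Q * |ζ - r| ≤ d / Q := by
    have := h 0 hk
    rw [hp0] at this
    rwa [zero_add, pow_one, ← mul_sub, abs_mul, abs_of_pos hQ0] at this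
  intro j
  induction j with
  | zero => intro _; simpa using ⟨hb1, hp0⟩
  | succ j ih =>
    intro hj
    obtain ⟨⟨s, hs⟩, -⟩ := ih (by omega)
    have hlip := pj_lip hα hL hζ hrJ hj
    have hh := h (j + 1) hj
    -- combine
    have h3 : |(Q : ℝ) * (r : ℝ) ^ (j + 1 + 1) - p (j + 1)| < 1 / Q := by
      have e : (Q : ℝ) * (r : ℝ) ^ (j + 1 + 1) - p (j + 1) =
        (Q * ζ ^ (j + 1 + 1) - p (j + 1)) - Q * (ζ ^ (j + 1 + 1) - (r : ℝ) ^ (j + 1 + 1)) := by ring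
      rw [e]
      refine (abs_sub _ _).trans_lt ?_
      rw [abs_mul, abs_of_pos hQ0]
      have h5 : Q * |ζ ^ (j + 1 + 1) - (r : ℝ) ^ (j + 1 + 1)| ≤ L * (d / Q) := by
        calc _ ≤ Q * (L * |ζ - r|) := by gcongr
          _ = L * (Q * |ζ - r|) := by ring
          _ ≤ _ := by gcongr
      have h6 : d / Q + L * (d / Q) < 1 / Q := by
        have : d / Q + L * (d / Q) = (d + d * L) / Q := by ring
        rw [this]
        gcongr
        linarith
      linarith
    have hsR : (Q : ℝ) = (r.den : ℝ) ^ (j + 1) * s := by exact_mod_cast hs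
    have h7 : (Q : ℝ) * (r : ℝ) ^ (j + 1 + 1) - p (j + 1) =
        ((s * r.num ^ (j + 1 + 1) - p (j + 1) * r.den : ℤ) : ℝ) / r.den := by
      push_cast
      nth_rewrite 1 [hsR]
      rw [hrd, div_pow, pow_succ (r.den : ℝ) (j + 1)]
      field_simp
    rw [h7, abs_div, abs_of_pos hb0, div_lt_iff₀ hb0] at h3
    have h8 : |((s * r.num ^ (j + 1 + 1) - p (j + 1) * r.den : ℤ) : ℝ)| < 1 := by
      refine h3.trans_le ?_
      rw [one_div_mul_eq_div, div_le_one hQ0]; exact hbQ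
    have h9 : (s * r.num ^ (j + 1 + 1) - p (j + 1) * r.den : ℤ) = 0 := by
      rw [← Int.abs_lt_one_iff]; exact_mod_cast h8
    have hfin : (p (j + 1) : ℝ) = Q * (r : ℝ) ^ (j + 1 + 1) := by
      rw [h9] at h7; simp at h7; linarith
    refine ⟨?_, hfin⟩
    have h10 : (r.den : ℤ) ∣ s * r.num ^ (j + 1 + 1) := ⟨p (j + 1), by linarith⟩
    have hco : IsCoprime (r.den : ℤ) (r.num ^ (j + 1 + 1)) := by
      apply IsCoprime.pow_right
      rw [Int.isCoprime_iff_nat_coprime]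
      simpa using r.reduced.symm
    have h11 : r.den ∣ s := by exact_mod_cast hco.dvd_of_dvd_mul_right h10
    rw [pow_succ, hs]
    exact Nat.mul_dvd_mul_left _ h11

/-- Existence of the point: it avoids a given sequence and has exact approximation. -/
lemma pj_exists {k : ℕ} (hk : 2 ≤ k) {α β L c₀ d : ℝ} {Ψ : ℕ → ℝ} (hα : 0 ≤ α) (hαβ : α < β)
    (hL : ∀ t ∈ Ioo α β, ∀ j < k, ((j : ℝ) + 1) * t ^ j ≤ L) (hL1 : 1 ≤ L)
    (hc0 : 0 < c₀) (hc1 : c₀ < 1) (hpos : ∀ q, 0 < Ψ q) (hd0 : 0 < d) (hd : d < 1 / 2) {N : ℕ}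
    (hN : ∀ x : ℕ, N ≤ x → Ψ x < d / (x : ℝ)) (x : ℕ → ℝ) :
    ∃ (ζ : ℝ) (m : ℕ → ℕ) (p : ℕ → ℤ), ζ ∈ Ioo α β ∧ (∀ n, ζ ≠ x n) ∧ StrictMono m ∧
      (∀ n, Odd (p n)) ∧
      (∀ n, ∀ j < k, |ζ ^ (j + 1) - ((p n : ℝ) / 2 ^ m n) ^ (j + 1)| ≤ pjψ k Ψ (2 ^ m n)) ∧
      (∀ n, ∃ j < k, c₀ * pjψ k Ψ (2 ^ m n) < |ζ ^ (j + 1) - ((p n : ℝ) / 2 ^ m n) ^ (j + 1)|) ∧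
      (∀ n, 8 * (2 ^ m n * pjψ k Ψ (2 ^ m n)) ^ 3 * 2 ^ m (n + 1) ≤ 1) := by
  obtain ⟨M, hM⟩ := pow_unbounded_of_one_lt
    (max (N : ℝ) (max (192 / ((1 - c₀) / (2 * L))) (4 / (β - α)))) (one_lt_two)
  have hM1 : N ≤ 2 ^ M := by exact_mod_cast ((le_max_left _ _).trans hM.le)
  have hM2 : 192 / ((1 - c₀) / (2 * L)) ≤ 2 ^ M :=
    (le_max_left _ _).trans ((le_max_right _ _).trans hM.le)
  have hM3 : 4 / (β - α) ≤ 2 ^ M :=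
    (le_max_right _ _).trans ((le_max_right _ _).trans hM.le)
  have h0 : (4 : ℝ) / 2 ^ M ≤ β - α := by
    rw [div_le_iff₀ (by linarith)] at hM3
    rw [div_le_iff₀ (by positivity)]; linarith
  obtain ⟨p0, u0, v0, hg0, -, -⟩ := pj_place hk hα hL hL1 hc0 hc1 hpos hd0 hd hN hM1
    (le_refl M) (le_refl α) (le_refl β) h0
  have hstep := pj_step_s5 hk hα hL hL1 hc0 hc1 hpos hd0 hd hN hM1 hM2
  choose! nxt hn1 hn2 hn3 hn4 hn5 hn6 using hstep
  let S : ℕ → ℕ × ℤ × ℝ × ℝ := fun n => Nat.rec (M, p0, u0, v0) (fun i s => nxt s (x i)) n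
  have hS : ∀ n, S (n + 1) = nxt (S n) (x n) := fun n => rfl
  have hG : ∀ n, PJGood k Ψ α β L c₀ M (S n) := by
    intro n
    induction n with
    | zero => exact hg0
    | succ n ih => rw [hS]; exact hn1 _ ih _
  have hmono : Monotone (fun n => (S n).2.2.1) :=
    monotone_nat_of_le_succ fun n => by rw [hS]; exact hn2 _ (hG n) _
  have hanti : Antitone (fun n => (S n).2.2.2) :=
    antitone_nat_of_succ_le fun n => by rw [hS]; exact hn3 _ (hG n) _
  have hle : (fun n => (S n).2.2.1) ≤ (fun n => (S n).2.2.2) := by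
    intro n
    have h := (hG n).2.2.2.2.1
    have h1 : 0 < (1 - c₀) / (2 * L) * pjψ k Ψ (2 ^ (S n).1) :=
      mul_pos (div_pos (by linarith) (by linarith)) (pjψ_pos hpos Nat.one_le_two_pow)
    simp only
    linarith
  have hζ := Monotone.ciSup_mem_iInter_Icc_of_antitone hmono hanti hle
  set ζ := ⨆ n, (S n).2.2.1
  have hζn : ∀ n, ζ ∈ Icc (S n).2.2.1 (S n).2.2.2 := fun n => mem_iInter.1 hζ n
  refine ⟨ζ, fun n => (S n).1, fun n => (S n).2.1, ?_, ?_, ?_, ?_, ?_, ?_, ?_⟩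
  · exact ⟨(hG 0).2.2.1.trans_le (hζn 0).1, (hζn 0).2.trans_lt (hG 0).2.2.2.1⟩
  · intro n hx
    have := hn4 _ (hG n) (x n)
    rw [← hS, ← hx] at this
    exact this (hζn (n + 1))
  · exact strictMono_nat_of_lt_succ fun n => by rw [hS]; exact hn5 _ (hG n) _
  · exact fun n => (hG n).2.1
  · exact fun n => ((hG n).2.2.2.2.2 ζ (hζn n)).1
  · exact fun n => ((hG n).2.2.2.2.2 ζ (hζn n)).2
  · intro n
    have := hn6 _ (hG n) (x n)
    simp only [hS]
    exact this

lemma pj_den (p : ℤ) (m : ℕ) (hp : Odd p) (r : ℚ) (h : r = (p : ℚ) / 2 ^ m) : r.den = 2 ^ m := by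
  have hc : Nat.Coprime p.natAbs ((2 ^ m : ℤ)).natAbs := by
    rw [Int.natAbs_pow]
    apply Nat.Coprime.pow_right
    have : Odd p.natAbs := Int.natAbs_odd.2 hp
    simpa using this.coprime_two_right
  have := Rat.den_div_eq_of_coprime (a := p) (b := 2 ^ m) (by positivity) hc
  rw [h]
  push_cast at this
  exact_mod_cast this

/-- No rational with large denominator approximates too well. -/
lemma pj_no {k : ℕ} (hk : 2 ≤ k) {c₀ d : ℝ} {Ψ : ℕ → ℝ}
    (hc0 : 0 < c₀) (hc1 : c₀ < 1) (hpos : ∀ q, 0 < Ψ q) (hd0 : 0 < d) (hd : d < 1 / 2) {N : ℕ}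
    (hN : ∀ x : ℕ, N ≤ x → Ψ x < d / (x : ℝ)) {ζ : ℝ} {m : ℕ → ℕ} {p : ℕ → ℤ}
    (hm : StrictMono m) (hp : ∀ n, Odd (p n))
    (h1 : ∀ n, ∀ j < k, |ζ ^ (j + 1) - ((p n : ℝ) / 2 ^ m n) ^ (j + 1)| ≤ pjψ k Ψ (2 ^ m n))
    (h2 : ∀ n, ∃ j < k,
      c₀ * pjψ k Ψ (2 ^ m n) < |ζ ^ (j + 1) - ((p n : ℝ) / 2 ^ m n) ^ (j + 1)|)
    (h3 : ∀ n, 8 * (2 ^ m n * pjψ k Ψ (2 ^ m n)) ^ 3 * 2 ^ m (n + 1) ≤ 1)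
    (r : ℚ) (hrN : N ≤ r.den) (hr0 : 2 ^ m 0 ≤ r.den)
    (h : ∀ j < k, |ζ ^ (j + 1) - (r : ℝ) ^ (j + 1)| ≤ c₀ * pjψ k Ψ r.den) : False := by
  have hb1 : 1 ≤ r.den := r.den_pos
  have hbR : (1 : ℝ) ≤ r.den := by exact_mod_cast hb1
  have hex : ∃ n, r.den ^ 3 < 2 ^ m (n + 1) := by
    refine ⟨r.den ^ 3, ?_⟩
    have a : r.den ^ 3 + 1 ≤ m (r.den ^ 3 + 1) := hm.id_le _
    have b := Nat.lt_two_pow_self (n := m (r.den ^ 3 + 1))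
    omega
  classical
  obtain ⟨n, hn1, hn2⟩ : ∃ n, 2 ^ m n ≤ r.den ^ 3 ∧ r.den ^ 3 < 2 ^ m (n + 1) := by
    refine ⟨Nat.find hex, ?_, Nat.find_spec hex⟩
    rcases Nat.eq_zero_or_pos (Nat.find hex) with h0 | h0
    · rw [h0]; exact hr0.trans (Nat.le_self_pow (by norm_num) _)
    · have := Nat.find_min hex (m := Nat.find hex - 1) (by omega)
      rw [Nat.sub_add_cancel h0] at this
      omega
  by_cases hrn : r = (p n : ℚ) / 2 ^ m n
  · have hden := pj_den _ _ (hp n) r hrn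
    obtain ⟨j, hj, hjj⟩ := h2 n
    have := h j hj
    rw [hden, hrn] at this
    push_cast at this
    linarith
  · have hψ := pjψ_lt hk hd0 hd hN hb1 hrN
    have hψ0 : 0 < pjψ k Ψ r.den := pjψ_pos hpos hb1
    have hζr := h 0 (by omega)
    have hζn := h1 n 0 (by omega)
    simp only [zero_add, pow_one] at hζr hζn
    have h3n := h3 n
    have hq0 : (0 : ℝ) < 2 ^ m n := by positivity
    have hb0 : (0 : ℝ) < r.den := by linarith
    have hψn0 : 0 < pjψ k Ψ (2 ^ m n) := pjψ_pos hpos Nat.one_le_two_pow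
    have hrd : (r : ℝ) = r.num / r.den := by exact_mod_cast (Rat.num_div_den r).symm
    have hn1R : (2 : ℝ) ^ m n ≤ (r.den : ℝ) ^ 3 := by exact_mod_cast hn1
    have hn2R : (r.den : ℝ) ^ 3 ≤ (2 : ℝ) ^ m (n + 1) := by exact_mod_cast hn2.le
    set q : ℝ := 2 ^ m n with hq
    set ψ := pjψ k Ψ (2 ^ m n)
    set b : ℝ := (r.den : ℝ) with hb
    have hsep : 1 / (b * q) ≤ |(r : ℝ) - p n / q| := by
      have e : (r : ℝ) - p n / q = ((r.num * 2 ^ m n - p n * r.den : ℤ) : ℝ) / (b * q) := by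
        rw [hrd]; push_cast; rw [← hq, ← hb]; field_simp
      rw [e, abs_div, abs_of_pos (mul_pos hb0 hq0)]
      gcongr
      have hne : (r.num * 2 ^ m n - p n * r.den : ℤ) ≠ 0 := by
        intro h0
        apply hrn
        have h5 : (r.num : ℚ) * 2 ^ m n = p n * r.den := by
          have : r.num * 2 ^ m n = p n * r.den := by linarith
          exact_mod_cast this
        have h6 : (r.den : ℚ) ≠ 0 := by exact_mod_cast r.den_nz
        rw [eq_div_iff (by positivity)]
        conv_lhs => rw [← Rat.num_div_den r]
        field_simp
        linarith
      exact_mod_cast Int.one_le_abs hne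
    have htri : |(r : ℝ) - p n / q| ≤ |ζ - r| + |ζ - p n / q| := by
      have := abs_sub_le (r : ℝ) ζ (p n / q)
      rwa [abs_sub_comm (r : ℝ) ζ] at this
    have h7 : |ζ - r| < 1 / (2 * (b * q)) := by
      have : 1 / (2 * b ^ 4) ≤ 1 / (2 * (b * q)) := by
        apply one_div_le_one_div_of_le (by positivity)
        have : b * q ≤ b * b ^ 3 := by gcongr
        nlinarith
      nlinarith
    have h8 : 1 / (2 * (b * q)) < ψ := by
      have : 1 / (b * q) = 1 / (2 * (b * q)) + 1 / (2 * (b * q)) := by field_simp; norm_num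
      linarith
    rw [div_lt_iff₀ (by positivity)] at h8
    have h9 : 1 < (ψ * (2 * (b * q))) ^ 3 := one_lt_pow₀ h8 (by norm_num)
    have h10 : (ψ * (2 * (b * q))) ^ 3 = 8 * (q * ψ) ^ 3 * b ^ 3 := by ring
    have h11 : 8 * (q * ψ) ^ 3 * b ^ 3 ≤ 8 * (q * ψ) ^ 3 * 2 ^ m (n + 1) := by gcongr
    linarith

theorem powers_jarnik_second (k : ℕ) (hk : 2 ≤ k)
    (α β : ℝ) (hα : 0 ≤ α) (hαβ : α < β)
    (d : ℝ) (hd0 : 0 < d) (hd : d < 1 / (2 * sSup (Lk k '' Ioo α β)))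
    (Ψ : ℕ → ℝ) (hpos : ∀ q, 0 < Ψ q)
    (hA2 : ∃ N : ℕ, ∀ x : ℕ, N ≤ x → Ψ x < d / (x : ℝ))
    (hB2 : ∀ l x : ℕ, 1 ≤ l → 1 ≤ x → Ψ (l * x) ≤ (l : ℝ) * Ψ x)
    (c₀ : ℝ) (hc₀0 : 0 < c₀) (hc₀1 : c₀ < 1) :
    ¬ ((Kk k Ψ \ Kk k (fun x => c₀ * Ψ x)) ∩ Ioo α β).Countable := by
  intro hcount
  obtain ⟨N, hN⟩ := hA2
  set L := sSup (Lk k '' Ioo α β) with hLdef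
  have hbdd : BddAbove (Lk k '' Ioo α β) := by
    by_contra hb
    rw [hLdef, Real.sSup_of_not_bddAbove hb] at hd
    simp at hd
    linarith
  have hL : ∀ t ∈ Ioo α β, ∀ j < k, ((j : ℝ) + 1) * t ^ j ≤ L := by
    intro t ht j hj
    have h1 : Lk k t ≤ L := le_csSup hbdd ⟨t, ht, rfl⟩
    refine le_trans ?_ h1
    exact le_ciSup (f := fun j : Fin k => (((j : ℕ) : ℝ) + 1) * t ^ (j : ℕ))
      (Set.finite_range _).bddAbove ⟨j, hj⟩
  have hL1 : 1 ≤ L := by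
    have := hL ((α + β) / 2) ⟨by linarith, by linarith⟩ 0 (by omega)
    simpa using this
  have hdL : d * L < 1 / 2 := by
    rw [lt_div_iff₀ (by linarith)] at hd
    linarith
  have hd2 : d < 1 / 2 := by nlinarith
  have hC := hcount.union (Algebraic.countable ℤ ℝ)
  obtain ⟨x, hx⟩ := hC.exists_eq_range ⟨0, Or.inr isAlgebraic_zero⟩
  obtain ⟨ζ, m, p, hζJ, hζx, hm, hp, h1, h2, h3⟩ :=
    pj_exists hk hα hαβ hL hL1 hc₀0 hc₀1 hpos hd0 hd2 hN x
  have hζC : ζ ∉ ((Kk k Ψ \ Kk k (fun x => c₀ * Ψ x)) ∩ Ioo α β) ∪ {x : ℝ | IsAlgebraic ℤ x} := by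
    rw [hx]; rintro ⟨n, hn⟩; exact hζx n hn.symm
  have htr : ¬ IsAlgebraic ℤ ζ := fun h => hζC (Or.inr h)
  have hirr : Irrational ζ := by
    rintro ⟨r, rfl⟩
    apply htr
    have : IsAlgebraic ℤ (algebraMap ℚ ℝ r) :=
      (IsFractionRing.isAlgebraic_iff ℤ ℚ ℝ).2 (isAlgebraic_algebraMap r)
    simpa using this
  apply hζC
  refine Or.inl ⟨⟨⟨?_, ?_⟩, ?_⟩, hζJ⟩
  · intro P hP _ h0
    exact htr ⟨P, hP, h0⟩
  · refine Set.infinite_of_injective_forall_mem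
      (f := fun n : ℕ => (((2 ^ m n) ^ k : ℕ),
        fun j : Fin k => (p n ^ ((j : ℕ) + 1) * (2 ^ m n) ^ (k - ((j : ℕ) + 1)) : ℤ))) ?_ ?_
    · intro a b hab
      have h := congrArg Prod.fst hab
      simp only at h
      have h' := Nat.pow_left_injective (show k ≠ 0 by omega) h
      exact hm.injective (Nat.pow_right_injective (le_refl 2) h')
    · intro n
      refine ⟨Nat.one_le_pow _ _ (by positivity), ?_⟩
      intro j
      have hj := h1 n j j.2
      have hq0 : (0 : ℝ) < 2 ^ m n := by positivity
      unfold pjψ at hj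
      push_cast at hj ⊢
      set q : ℝ := 2 ^ m n with hq
      rw [le_div_iff₀ (by positivity)] at hj
      have e : q ^ k * ζ ^ ((j : ℕ) + 1) - p n ^ ((j : ℕ) + 1) * q ^ (k - ((j : ℕ) + 1)) =
          (ζ ^ ((j : ℕ) + 1) - (p n / q) ^ ((j : ℕ) + 1)) * q ^ k := by
        have e1 : q ^ k = q ^ (k - ((j : ℕ) + 1)) * q ^ ((j : ℕ) + 1) := by
          rw [← pow_add, Nat.sub_add_cancel (by have := j.2; omega)]
        rw [div_pow, e1]
        field_simp
      rw [e, abs_mul, abs_of_pos (pow_pos hq0 k)]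
      exact hj
  · rintro ⟨-, hinf⟩
    -- small denominators are excluded since `ζ` is irrational
    have hev := hirr.eventually_forall_le_dist_cast_rat_of_den_le (max N (2 ^ m 0))
    obtain ⟨ε, hε0, hε⟩ : ∃ ε > 0, ∀ r : ℚ, r.den ≤ max N (2 ^ m 0) → ε ≤ dist ζ r := by
      have h5 := (hev.filter_mono nhdsWithin_le_nhds :
        ∀ᶠ ε in nhdsWithin (0 : ℝ) (Ioi 0), _).and self_mem_nhdsWithin
      obtain ⟨ε, h6, h7⟩ := h5.exists
      exact ⟨ε, h7, h6⟩
    set η := min ε (min (ζ - α) (β - ζ)) with hη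
    have hη0 : 0 < η := lt_min hε0 (lt_min (by linarith [hζJ.1]) (by linarith [hζJ.2]))
    obtain ⟨B, hB⟩ := exists_nat_gt (1 / η)
    -- an approximation with large `Q`
    obtain ⟨⟨Q, P⟩, ⟨hQ1, hQ⟩, hQB⟩ : ∃ qp : ℕ × (Fin k → ℤ), (1 ≤ qp.1 ∧
      ∀ j : Fin k, |(qp.1 : ℝ) * ζ ^ ((j : ℕ) + 1) - (qp.2 j : ℝ)| ≤ c₀ * Ψ qp.1) ∧
        max N B ≤ qp.1 := by
      by_contra hcon
      push Not at hcon
      apply hinf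
      have hfin : ∀ q : ℕ, {f : Fin k → ℤ | ∀ j : Fin k,
          |(q : ℝ) * ζ ^ ((j : ℕ) + 1) - (f j : ℝ)| ≤ c₀ * Ψ q}.Finite := by
        intro q
        refine (Set.Finite.pi' (t := fun j : Fin k =>
          Set.Icc ⌊(q : ℝ) * ζ ^ ((j : ℕ) + 1) - c₀ * Ψ q⌋
            ⌈(q : ℝ) * ζ ^ ((j : ℕ) + 1) + c₀ * Ψ q⌉)
          (fun j => Set.finite_Icc _ _)).subset ?_
        intro f hf j
        have := abs_le.1 (hf j)
        constructor
        · have h8 : (⌊(q : ℝ) * ζ ^ ((j : ℕ) + 1) - c₀ * Ψ q⌋ : ℝ) ≤ f j :=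
            (Int.floor_le _).trans (by linarith)
          exact_mod_cast h8
        · have h8 : (f j : ℝ) ≤ ⌈(q : ℝ) * ζ ^ ((j : ℕ) + 1) + c₀ * Ψ q⌉ :=
            le_trans (by linarith) (Int.le_ceil _)
          exact_mod_cast h8
      refine ((Set.finite_lt_nat (max N B)).biUnion
        (fun q _ => (hfin q).image (fun f => (q, f)))).subset ?_
      rintro ⟨q, f⟩ ⟨hq1, hqf⟩
      simp only [Set.mem_iUnion]
      exact ⟨q, hcon (q, f) ⟨hq1, hqf⟩, f, hqf, rfl⟩
    simp only at hQ1 hQ hQB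
    have hQN : N ≤ Q := (le_max_left _ _).trans hQB
    have hQB' : (B : ℝ) ≤ Q := by exact_mod_cast (le_max_right _ _).trans hQB
    have hQ0 : (0 : ℝ) < Q := by exact_mod_cast hQ1
    have hQR1 : (1 : ℝ) ≤ Q := by exact_mod_cast hQ1
    have hΨQ := hN Q hQN
    have hΨ0 := hpos Q
    let P' : ℕ → ℤ := fun j => if h : j < k then P ⟨j, h⟩ else 0
    have hP' : ∀ j < k, |(Q : ℝ) * ζ ^ (j + 1) - P' j| ≤ c₀ * Ψ Q := by
      intro j hj
      simpa [P', hj] using hQ ⟨j, hj⟩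
    have hP'' : ∀ j < k, |(Q : ℝ) * ζ ^ (j + 1) - P' j| ≤ d / Q := by
      intro j hj
      refine (hP' j hj).trans ?_
      nlinarith
    set r : ℚ := (P' 0 : ℚ) / Q with hr
    have hrR : (r : ℝ) = P' 0 / Q := by rw [hr]; push_cast; rfl
    have hζr : |ζ - r| < η := by
      have h4 := hP'' 0 (by omega)
      have e : ζ - r = ((Q : ℝ) * ζ ^ (0 + 1) - P' 0) / Q := by
        rw [hrR]; field_simp; ring
      rw [e, abs_div, abs_of_pos hQ0]
      have h5 : 1 < η * Q := by
        rw [div_lt_iff₀ hη0] at hB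
        nlinarith
      rw [div_lt_iff₀ hQ0]
      refine h4.trans_lt ((div_le_self hd0.le hQR1).trans_lt ?_)
      linarith
    have hrJ : (r : ℝ) ∈ Ioo α β := by
      have h4 := abs_lt.1 hζr
      have h5 : η ≤ ζ - α := (min_le_right _ _).trans (min_le_left _ _)
      have h6 : η ≤ β - ζ := (min_le_right _ _).trans (min_le_right _ _)
      exact ⟨by linarith, by linarith⟩
    have hden : max N (2 ^ m 0) < r.den := by
      by_contra hcon
      push Not at hcon
      have := hε r hcon
      rw [Real.dist_eq] at this
      have h5 : η ≤ ε := min_le_left _ _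
      linarith
    have hdiv := pj_div hα hL hd2 hdL hL1 hζJ hQ1 P' r hr hrJ (by omega) hP''
    refine pj_no hk hc₀0 hc₀1 hpos hd0 hd2 hN hm hp h1 h2 h3 r
      ((le_max_left _ _).trans hden.le) ((le_max_right _ _).trans hden.le) ?_
    intro j hj
    obtain ⟨l, hl⟩ : r.den ^ k ∣ Q := by
      have := (hdiv (k - 1) (by omega)).1
      rwa [Nat.sub_add_cancel (by omega)] at this
    have hl1 : 1 ≤ l := by
      rcases Nat.eq_zero_or_pos l with h0 | h0
      · rw [h0] at hl; omega
      · exact h0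
    have hb0 : (0 : ℝ) < (r.den : ℝ) ^ k := by
      have : (0 : ℝ) < r.den := by exact_mod_cast r.den_pos
      positivity
    have hΨl : Ψ Q ≤ l * Ψ (r.den ^ k) := by
      have := hB2 l (r.den ^ k) hl1 (Nat.one_le_pow _ _ r.den_pos)
      rwa [mul_comm, ← hl] at this
    have hlR : (0 : ℝ) < l := by exact_mod_cast hl1
    have hQl : (Q : ℝ) = (r.den : ℝ) ^ k * l := by exact_mod_cast hl
    have h4 := hP' j hj
    rw [(hdiv j hj).2, ← mul_sub, abs_mul, abs_of_pos hQ0] at h4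
    unfold pjψ
    rw [← mul_div_assoc, le_div_iff₀ hb0]
    have h5 : l * (|ζ ^ (j + 1) - (r : ℝ) ^ (j + 1)| * (r.den : ℝ) ^ k) ≤
        l * (c₀ * Ψ (r.den ^ k)) := by
      calc _ = (Q : ℝ) * |ζ ^ (j + 1) - (r : ℝ) ^ (j + 1)| := by rw [hQl]; ring
        _ ≤ c₀ * Ψ Q := h4
        _ ≤ c₀ * (l * Ψ (r.den ^ k)) := by gcongr
        _ = _ := by ring
    exact le_of_mul_le_mul_left h5 hlR
end

section
/- Let k ≥ 1 be an integer and let Ψ : (0,∞) → (0,∞) be admissible of degree k, i.e. Ψ(x) = o(x^{−2k+1}) as x → ∞ and Ψ(x)/Ψ(y) ≥ (y/x)^{k−1} for all sufficiently large x ≤ y. For j ≥ 1 define Ψ_j(x) := Ψ(x^{1/j})·x^{(j−1)/j}, so Ψ₁ = Ψ. Then each of the functions Ψ₁, …, Ψ_k satisfies Ψ_j(x) = o(1/x) as x → ∞ and is non-increasing for sufficiently large arguments, and the sets 𝒦^j := 𝒦_j(Ψ_j) \ ⋃_{0<c<1} 𝒦_j(cΨ_j) for 1 ≤ j ≤ k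 all coincide within (−1/2, 1/2), i.e. (−1/2,1/2) ∩ 𝒦^j = (−1/2,1/2) ∩ 𝒦^1 for all 1 ≤ j ≤ k. -/
open Filter Set

/-- `psiJ Ψ j x = Ψ(x^{1/j}) · x^{(j-1)/j}`. -/
noncomputable def psiJ (Ψ : ℝ → ℝ) (j : ℕ) (x : ℝ) : ℝ :=
  Ψ (x ^ ((1 : ℝ) / (j : ℝ))) * x ^ (((j : ℝ) - 1) / (j : ℝ))

lemma aux_fin (a b : ℝ) : {n : ℤ | |a - (n : ℝ)| ≤ b}.Finite := by
  apply (Set.finite_Icc ⌈a - b⌉ ⌊a + b⌋).subset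
  intro n hn
  have h := abs_le.1 (show |a - (n : ℝ)| ≤ b from hn)
  exact ⟨Int.ceil_le.2 (by linarith), Int.le_floor.2 (by linarith)⟩

lemma aux_inf (k : ℕ) (ζ : ℝ) (f : ℕ → ℝ) :
    {qp : ℕ × (Fin k → ℤ) | 1 ≤ qp.1 ∧
      ∀ j : Fin k, |(qp.1 : ℝ) * ζ ^ ((j : ℕ) + 1) - (qp.2 j : ℝ)| ≤ f qp.1}.Infinite ↔
    ∀ N : ℕ, ∃ q : ℕ, N ≤ q ∧ 1 ≤ q ∧ ∃ p : Fin k → ℤ,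
      ∀ j : Fin k, |(q : ℝ) * ζ ^ ((j : ℕ) + 1) - (p j : ℝ)| ≤ f q := by
  constructor
  · intro h N
    by_contra hc
    push Not at hc
    apply h
    have hfin : (⋃ q ∈ Set.Iio N, (fun p : Fin k → ℤ => (q, p)) ''
        (Set.pi Set.univ fun j : Fin k =>
          {n : ℤ | |(q : ℝ) * ζ ^ ((j : ℕ) + 1) - (n : ℝ)| ≤ f q})).Finite := by
      apply (Set.finite_Iio N).biUnion
      intro q _
      apply Set.Finite.image
      exact Set.Finite.pi fun j => aux_fin _ _
    apply hfin.subset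
    rintro ⟨q, p⟩ ⟨h1, h2⟩
    simp only [Set.mem_iUnion]
    refine ⟨q, ?_, p, ?_, rfl⟩
    · by_contra hq
      obtain ⟨j, hj⟩ := hc q (by simpa using hq) h1 p
      exact absurd (h2 j) (not_le.2 hj)
    · intro j _
      exact h2 j
  · intro h
    apply Set.Infinite.of_image Prod.fst
    apply Set.infinite_of_not_bddAbove
    rintro ⟨M, hM⟩
    obtain ⟨q, hq, h1, p, hp⟩ := h (M + 1)
    have := hM ⟨(q, p), ⟨h1, hp⟩, rfl⟩
    simp at this
    omega

lemma aux_pow (x y : ℝ) (hx : |x| ≤ 1 / 2) (hy : |y| ≤ 1 / 2) (i : ℕ) :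
    |x ^ (i + 1) - y ^ (i + 1)| ≤ |x - y| := by
  induction i with
  | zero => simp
  | succ i ih =>
    have e : x ^ (i + 1 + 1) - y ^ (i + 1 + 1)
        = x * (x ^ (i + 1) - y ^ (i + 1)) + y ^ (i + 1) * (x - y) := by ring
    rw [e]
    have hy2 : |y ^ (i + 1)| ≤ 1 / 2 := by
      rw [abs_pow, pow_succ]
      have : |y| ^ i ≤ 1 := pow_le_one₀ (abs_nonneg _) (by linarith)
      nlinarith [abs_nonneg y]
    calc _ ≤ |x * (x ^ (i + 1) - y ^ (i + 1))| + |y ^ (i + 1) * (x - y)| := abs_add_le _ _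
      _ = |x| * |x ^ (i + 1) - y ^ (i + 1)| + |y ^ (i + 1)| * |x - y| := by rw [abs_mul, abs_mul]
      _ ≤ 1 / 2 * |x - y| + 1 / 2 * |x - y| := by gcongr
      _ = _ := by ring

lemma psiJ_pow (Ψ : ℝ → ℝ) (j : ℕ) (hj : 1 ≤ j) (t : ℝ) (ht : 0 ≤ t) :
    psiJ Ψ j (t ^ j) = Ψ t * t ^ (j - 1) := by
  have hj0 : (j : ℝ) ≠ 0 := by positivity
  unfold psiJ
  rw [← Real.rpow_natCast t j, ← Real.rpow_mul ht, ← Real.rpow_mul ht, mul_one_div_cancel hj0,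
    mul_div_cancel₀ _ hj0, Real.rpow_one, ← Real.rpow_natCast t (j - 1)]
  push_cast [hj]
  rfl

lemma psiJ_root (Ψ : ℝ → ℝ) (j : ℕ) (hj : 1 ≤ j) (x : ℝ) (hx : 0 ≤ x) :
    psiJ Ψ j x = Ψ (x ^ ((1 : ℝ) / j)) * (x ^ ((1 : ℝ) / j)) ^ (j - 1) := by
  rw [← psiJ_pow Ψ j hj _ (Real.rpow_nonneg hx _), one_div,
    Real.rpow_inv_natCast_pow hx (by omega)]

lemma psiJ_one (Ψ : ℝ → ℝ) (x : ℝ) : psiJ Ψ 1 x = Ψ x := by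
  simp [psiJ]

lemma decayJ (k : ℕ) (Ψ : ℝ → ℝ)
    (hpos : ∀ x : ℝ, 0 < x → 0 < Ψ x)
    (hdecay : Tendsto (fun x : ℝ => x ^ (2 * k - 1) * Ψ x) atTop (nhds 0))
    (j : ℕ) (hj : 1 ≤ j) (hjk : j ≤ k) :
    Tendsto (fun x : ℝ => x * psiJ Ψ j x) atTop (nhds 0) := by
  have hroot : Tendsto (fun x : ℝ => x ^ ((1 : ℝ) / j)) atTop atTop :=
    tendsto_rpow_atTop (by positivity)
  have h1 : Tendsto (fun t : ℝ => t ^ (2 * j - 1) * Ψ t) atTop (nhds 0) := by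
    apply squeeze_zero' _ _ hdecay
    · filter_upwards [eventually_gt_atTop 0] with t ht
      have := hpos t ht
      positivity
    · filter_upwards [eventually_ge_atTop 1] with t ht
      have := hpos t (by linarith)
      have : t ^ (2 * j - 1) ≤ t ^ (2 * k - 1) := pow_le_pow_right₀ ht (by omega)
      gcongr
  refine (h1.comp hroot).congr' ?_
  filter_upwards [eventually_ge_atTop 0] with x hx
  simp only [Function.comp]
  rw [psiJ_root Ψ j hj x hx]
  have : x = (x ^ ((1 : ℝ) / j)) ^ j := by
    rw [one_div, Real.rpow_inv_natCast_pow hx (by omega)]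
  generalize x ^ ((1 : ℝ) / j) = t at *
  rw [this]
  have e : 2 * j - 1 = j + (j - 1) := by omega
  rw [e, pow_add]
  ring

lemma monoJ (k : ℕ) (Ψ : ℝ → ℝ)
    (hpos : ∀ x : ℝ, 0 < x → 0 < Ψ x)
    (hB0 : ∃ X : ℝ, 0 < X ∧ ∀ x y : ℝ, X ≤ x → x ≤ y → (y / x) ^ (k - 1) ≤ Ψ x / Ψ y)
    (j : ℕ) (hj : 1 ≤ j) (hjk : j ≤ k) :
    ∃ X : ℝ, ∀ x y : ℝ, X ≤ x → x ≤ y → psiJ Ψ j y ≤ psiJ Ψ j x := by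
  obtain ⟨X, hX, h⟩ := hB0
  refine ⟨X ^ j, fun x y hx hxy => ?_⟩
  have hx0 : 0 < x := lt_of_lt_of_le (by positivity) hx
  have hy0 : 0 < y := by linarith
  rw [psiJ_root Ψ j hj x hx0.le, psiJ_root Ψ j hj y hy0.le]
  have hs : X ≤ x ^ ((1 : ℝ) / j) := by
    rw [one_div, Real.le_rpow_inv_iff_of_pos hX.le hx0.le (by positivity), Real.rpow_natCast]
    exact hx
  have hst : x ^ ((1 : ℝ) / j) ≤ y ^ ((1 : ℝ) / j) := by gcongr
  generalize x ^ ((1 : ℝ) / j) = s at *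
  generalize y ^ ((1 : ℝ) / j) = t at *
  have hs0 : 0 < s := by linarith
  have ht0 : 0 < t := by linarith
  have h1 := h s t hs hst
  have h2 : (t / s) ^ (j - 1) ≤ (t / s) ^ (k - 1) :=
    pow_le_pow_right₀ ((one_le_div hs0).2 hst) (by omega)
  have h3 := h2.trans h1
  rw [div_pow, div_le_div_iff₀ (by positivity) (hpos t ht0)] at h3
  linarith

lemma fwd (k : ℕ) (Ψ : ℝ → ℝ)
    (hpos : ∀ x : ℝ, 0 < x → 0 < Ψ x)
    (hdecay : Tendsto (fun x : ℝ => x ^ (2 * k - 1) * Ψ x) atTop (nhds 0))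
    (j : ℕ) (hj : 1 ≤ j) (hjk : j ≤ k) (c : ℝ) (hc1 : c ≤ 1) (ζ : ℝ)
    (hζ : |ζ| < 1 / 2) (h : ζ ∈ Kk 1 (fun q : ℕ => c * psiJ Ψ 1 q)) :
    ζ ∈ Kk j (fun q : ℕ => c * psiJ Ψ j q) := by
  obtain ⟨hirr, hinf⟩ := h
  have hinf := (aux_inf 1 ζ (fun q : ℕ => c * psiJ Ψ 1 q)).1 hinf
  have hζi : Irrational ζ := by
    rintro ⟨r, rfl⟩
    apply hirr (Polynomial.C (r.den : ℤ) * Polynomial.X + Polynomial.C (-r.num))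
    · intro h0
      have := congrArg (fun P => Polynomial.coeff P 1) h0
      rw [Polynomial.coeff_add, Polynomial.coeff_C_mul, Polynomial.coeff_X_one,
        Polynomial.coeff_C_of_ne_zero (by norm_num)] at this
      simp at this
    · exact Polynomial.natDegree_linear_le
    · have : (r.den : ℝ) * (r : ℝ) = r.num := by exact_mod_cast Rat.den_mul_eq_num r
      simp [this]
  have hd1 : ∀ η : ℝ, 0 < η → ∃ M : ℕ, ∀ q : ℕ, M ≤ q →
      (q : ℝ) ^ (2 * k - 1) * Ψ q < η := by
    intro η hη
    have := (hdecay.comp tendsto_natCast_atTop_atTop).eventually (gt_mem_nhds hη)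
    obtain ⟨M, hM⟩ := eventually_atTop.1 this
    exact ⟨M, hM⟩
  refine ⟨?_, (aux_inf j ζ (fun q : ℕ => c * psiJ Ψ j q)).2 ?_⟩
  · intro P hP hdeg hroot
    obtain ⟨A, hA, hL⟩ := Liouville.exists_pos_real_of_irrational_root hζi hP
      (by rwa [Polynomial.aeval_def, ← Polynomial.eval_map] at hroot)
    obtain ⟨M, hM⟩ := hd1 (1 / A) (by positivity)
    obtain ⟨q, hMq, hq1, p, hp⟩ := hinf M
    have hp0 := hp 0
    simp only [psiJ_one, Fin.val_zero, zero_add, pow_one] at hp0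
    have hM := hM q hMq
    have hL := hL (p 0) (q - 1)
    have e : ((q - 1 : ℕ) : ℝ) + 1 = q := by push_cast [hq1]; ring
    rw [e] at hL
    have hq0 : (0 : ℝ) < q := by exact_mod_cast hq1
    have hq1' : (1 : ℝ) ≤ q := by exact_mod_cast hq1
    have hΨ := hpos q hq0
    have e2 : |ζ - (p 0 : ℝ) / q| = |q * ζ - p 0| / q := by
      rw [← abs_of_pos hq0, ← abs_div, abs_of_pos hq0]; congr 1; field_simp
    have h3 : |ζ - (p 0 : ℝ) / q| ≤ Ψ q := by
      rw [e2, div_le_iff₀ hq0]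
      nlinarith
    have h4 : (q : ℝ) ^ P.natDegree ≤ (q : ℝ) ^ (2 * k - 1) :=
      pow_le_pow_right₀ hq1' (by omega)
    have h5 : (q : ℝ) ^ P.natDegree * (|ζ - (p 0 : ℝ) / q| * A) ≤
        (q : ℝ) ^ (2 * k - 1) * (Ψ q * A) := by gcongr
    rw [lt_div_iff₀ hA] at hM
    nlinarith
  · intro N
    obtain ⟨M, hM⟩ := hd1 (1 / 2 - |ζ|) (by linarith)
    obtain ⟨q, hMq, hq1, p, hp⟩ := hinf (max N M)
    have hp0 := hp 0
    simp only [psiJ_one, Fin.val_zero, zero_add, pow_one] at hp0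
    have hM := hM q (le_trans (le_max_right _ _) hMq)
    have hq0 : (0 : ℝ) < q := by exact_mod_cast hq1
    have hq1' : (1 : ℝ) ≤ q := by exact_mod_cast hq1
    have hΨ := hpos q hq0
    have hone : (1 : ℝ) ≤ (q : ℝ) ^ (2 * k - 1) := one_le_pow₀ hq1'
    have e2 : |ζ - (p 0 : ℝ) / q| = |q * ζ - p 0| / q := by
      rw [← abs_of_pos hq0, ← abs_div, abs_of_pos hq0]; congr 1; field_simp
    have h3 : |ζ - (p 0 : ℝ) / q| ≤ Ψ q := by
      rw [e2, div_le_iff₀ hq0]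
      nlinarith
    have hr : |(p 0 : ℝ) / q| ≤ 1 / 2 := by
      have : |(p 0 : ℝ) / q| ≤ |ζ| + |ζ - (p 0 : ℝ) / q| := by
        rw [abs_sub_comm]
        have := abs_add_le ζ ((p 0 : ℝ) / q - ζ)
        simpa using this
      nlinarith
    refine ⟨q ^ j, ?_, Nat.one_le_pow _ _ hq1, fun i => p 0 ^ ((i : ℕ) + 1) * (q : ℤ) ^ (j - ((i : ℕ) + 1)), ?_⟩
    · exact (le_trans (le_max_left _ _) hMq).trans (Nat.le_self_pow (by omega) q)
    · intro i
      have hi : (i : ℕ) + 1 ≤ j := i.2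
      push_cast
      rw [psiJ_pow Ψ j hj _ hq0.le]
      have e3 : (q : ℝ) ^ j * ζ ^ ((i : ℕ) + 1) -
          (p 0 : ℝ) ^ ((i : ℕ) + 1) * (q : ℝ) ^ (j - ((i : ℕ) + 1))
          = (q : ℝ) ^ j * (ζ ^ ((i : ℕ) + 1) - ((p 0 : ℝ) / q) ^ ((i : ℕ) + 1)) := by
        have : (q : ℝ) ^ j = (q : ℝ) ^ ((i : ℕ) + 1) * (q : ℝ) ^ (j - ((i : ℕ) + 1)) := by
          rw [← pow_add]; congr 1; omega
        rw [this, div_pow]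
        field_simp
      rw [e3, abs_mul, abs_of_pos (by positivity)]
      calc _ ≤ (q : ℝ) ^ j * |ζ - (p 0 : ℝ) / q| := by
            refine mul_le_mul_of_nonneg_left ?_ (by positivity)
            exact aux_pow _ _ hζ.le hr _
        _ = (q : ℝ) ^ (j - 1) * |q * ζ - p 0| := by
            rw [e2]
            have : (q : ℝ) ^ j = (q : ℝ) ^ (j - 1) * q := by
              rw [← pow_succ]; congr 1; omega
            rw [this]; field_simp
        _ ≤ (q : ℝ) ^ (j - 1) * (c * Ψ q) := by gcongr
        _ = _ := by ring

lemma bwd (k : ℕ) (Ψ : ℝ → ℝ)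
    (hpos : ∀ x : ℝ, 0 < x → 0 < Ψ x)
    (hdecay : Tendsto (fun x : ℝ => x ^ (2 * k - 1) * Ψ x) atTop (nhds 0))
    (hB0 : ∃ X : ℝ, 0 < X ∧ ∀ x y : ℝ, X ≤ x → x ≤ y → (y / x) ^ (k - 1) ≤ Ψ x / Ψ y)
    (j : ℕ) (hj : 1 ≤ j) (hjk : j ≤ k) (c : ℝ) (hc0 : 0 < c) (hc1 : c ≤ 1) (ζ : ℝ)
    (hζ : |ζ| < 1 / 2) (h : ζ ∈ Kk j (fun q : ℕ => c * psiJ Ψ j q)) :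
    ζ ∈ Kk 1 (fun q : ℕ => c * psiJ Ψ 1 q) := by
  obtain ⟨hirr, hinf⟩ := h
  have hinf := (aux_inf j ζ (fun q : ℕ => c * psiJ Ψ j q)).1 hinf
  have hirr1 : ∀ P : Polynomial ℤ, P ≠ 0 → P.natDegree ≤ 1 → (Polynomial.aeval ζ) P ≠ 0 :=
    fun P h0 h1 => hirr P h0 (h1.trans hj)
  have hζi : Irrational ζ := by
    rintro ⟨r, rfl⟩
    apply hirr1 (Polynomial.C (r.den : ℤ) * Polynomial.X + Polynomial.C (-r.num))
    · intro h0
      have := congrArg (fun P => Polynomial.coeff P 1) h0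
      rw [Polynomial.coeff_add, Polynomial.coeff_C_mul, Polynomial.coeff_X_one,
        Polynomial.coeff_C_of_ne_zero (by norm_num)] at this
      simp at this
    · exact Polynomial.natDegree_linear_le
    · have : (r.den : ℝ) * (r : ℝ) = r.num := by exact_mod_cast Rat.den_mul_eq_num r
      simp [this]
  refine ⟨hirr1, (aux_inf 1 ζ (fun q : ℕ => c * psiJ Ψ 1 q)).2 ?_⟩
  intro N
  obtain ⟨X, hX⟩ := monoJ k Ψ hpos hB0 j hj hjk
  obtain ⟨B, hB⟩ := exists_nat_ge (max X N)
  have hε := (hζi.eventually_forall_le_dist_cast_rat_of_den_le B)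
  obtain ⟨δ, hδ, hδ'⟩ := Metric.eventually_nhds_iff.1 hε
  have hε' := @hδ' (δ / 2) (by
    rw [Real.dist_eq, sub_zero, abs_of_pos (by linarith)]; linarith)
  set η : ℝ := min (min (δ / 2) (1 / 2 - |ζ|)) (1 / 2) with hη
  have hη0 : 0 < η := by
    apply lt_min (lt_min _ _) <;> linarith
  have hη1 : η ≤ δ / 2 := (min_le_left _ _).trans (min_le_left _ _)
  have hη2 : η ≤ 1 / 2 - |ζ| := (min_le_left _ _).trans (min_le_right _ _)
  have hη3 : η ≤ 1 / 2 := min_le_right _ _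
  have hd := ((decayJ k Ψ hpos hdecay j hj hjk).comp tendsto_natCast_atTop_atTop).eventually
    (gt_mem_nhds hη0)
  obtain ⟨M, hM⟩ := eventually_atTop.1 hd
  obtain ⟨q, hMq, hq1, p, hp⟩ := hinf M
  have hM : (q : ℝ) * psiJ Ψ j q < η := hM q hMq
  have hq0 : (0 : ℝ) < q := by exact_mod_cast hq1
  have hq1' : (1 : ℝ) ≤ q := by exact_mod_cast hq1
  have hψ : 0 < psiJ Ψ j q := by
    unfold psiJ
    have := hpos ((q : ℝ) ^ ((1 : ℝ) / (j : ℝ))) (by positivity)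
    positivity
  have hcψ : c * psiJ Ψ j q ≤ psiJ Ψ j q := by nlinarith
  have hp0 := hp ⟨0, hj⟩
  simp only [zero_add, pow_one] at hp0
  set p1 : ℤ := p ⟨0, hj⟩ with hp1
  set r : ℚ := (p1 : ℚ) / (q : ℚ) with hr
  have hrR : (r : ℝ) = (p1 : ℝ) / q := by rw [hr]; push_cast; rfl
  have e2 : |q * ζ - p1| = q * |ζ - r| := by
    rw [hrR]
    nth_rewrite 2 [← abs_of_pos hq0]
    rw [← abs_mul]; congr 1; field_simp
  have h3 : |ζ - r| < η := by
    rw [e2] at hp0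
    nlinarith [abs_nonneg (ζ - r)]
  have hr2 : |(r : ℝ)| ≤ 1 / 2 := by
    have : |(r : ℝ)| ≤ |ζ| + |ζ - r| := by
      rw [abs_sub_comm]
      have := abs_add_le ζ ((r : ℝ) - ζ)
      simpa using this
    linarith
  have hden : B < r.den := by
    by_contra hc
    have := hε' r (by omega)
    rw [Real.dist_eq] at this
    linarith
  have hrden0 : (0 : ℝ) < r.den := by exact_mod_cast r.den_pos
  have hrr : (r : ℝ) = r.num / r.den := by exact_mod_cast (Rat.num_div_den r).symm
  have hdvd : ∀ i : ℕ, i + 1 ≤ j → r.den ^ (i + 1) ∣ q := by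
    intro i
    induction i with
    | zero =>
      intro _
      have : ((r.den : ℕ) : ℤ) ∣ (q : ℤ) := by
        have := Rat.den_dvd p1 q
        rw [hr]
        exact_mod_cast this
      rw [zero_add, pow_one]
      exact_mod_cast this
    | succ i ih =>
      intro hi
      obtain ⟨m, hm⟩ := ih (by omega)
      have hpi := hp ⟨i + 1, hi⟩
      simp only at hpi
      set P : ℤ := p ⟨i + 1, hi⟩
      have h5 : |(q : ℝ) * ζ ^ (i + 1 + 1) - q * (r : ℝ) ^ (i + 1 + 1)| ≤ psiJ Ψ j q := by
        rw [← mul_sub, abs_mul, abs_of_pos hq0]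
        refine le_trans ?_ (hp0.trans hcψ)
        rw [e2]
        refine mul_le_mul_of_nonneg_left ?_ hq0.le
        exact aux_pow _ _ hζ.le hr2 _
      have h6 : |(P : ℝ) - q * (r : ℝ) ^ (i + 1 + 1)| ≤ 2 * psiJ Ψ j q := by
        have := abs_sub_le (P : ℝ) ((q : ℝ) * ζ ^ (i + 1 + 1)) (q * (r : ℝ) ^ (i + 1 + 1))
        rw [abs_sub_comm (P : ℝ) ((q : ℝ) * ζ ^ (i + 1 + 1))] at this
        linarith
      have h7 : (r.den : ℝ) * ((P : ℝ) - q * (r : ℝ) ^ (i + 1 + 1)) =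
          ((r.den * P - m * r.num ^ (i + 1 + 1) : ℤ) : ℝ) := by
        have hqR : (q : ℝ) = (r.den : ℝ) ^ (i + 1) * m := by exact_mod_cast hm
        rw [hqR, hrr]
        push_cast
        generalize (r.den : ℝ) = d at hrden0
        have hd0 : d ≠ 0 := hrden0.ne'
        rw [div_pow]
        field_simp
        ring
      have hdq : (r.den : ℝ) ≤ q := by
        have : r.den ∣ q := (dvd_pow_self _ (by omega)).trans (Dvd.intro _ hm.symm)
        exact_mod_cast Nat.le_of_dvd hq1 this
      have h8 : |((r.den * P - m * r.num ^ (i + 1 + 1) : ℤ) : ℝ)| < 1 := by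
        rw [← h7, abs_mul, abs_of_pos hrden0]
        calc _ ≤ (q : ℝ) * (2 * psiJ Ψ j q) := by gcongr
          _ < 1 := by linarith
      have h9 : (r.den * P - m * r.num ^ (i + 1 + 1) : ℤ) = 0 := by
        rw [← Int.abs_lt_one_iff]
        exact_mod_cast h8
      have h10 : (r.den : ℤ) ∣ m * r.num ^ (i + 1 + 1) := ⟨P, by linarith⟩
      have hcop : IsCoprime (r.den : ℤ) (r.num ^ (i + 1 + 1)) := by
        apply IsCoprime.pow_right
        rw [Int.isCoprime_iff_gcd_eq_one, Int.gcd_comm]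
        exact r.reduced
      have h11 := hcop.dvd_of_dvd_mul_right h10
      have h12 : r.den ∣ m := by exact_mod_cast h11
      rw [hm, pow_succ]
      exact mul_dvd_mul_left _ h12
  have hd := hdvd (j - 1) (by omega)
  rw [Nat.sub_add_cancel hj] at hd
  have hle : r.den ^ j ≤ q := Nat.le_of_dvd hq1 hd
  have hleR : (r.den : ℝ) ^ j ≤ q := by exact_mod_cast hle
  have hBR : (B : ℝ) ≤ r.den := by exact_mod_cast hden.le
  have hden1 : (1 : ℝ) ≤ r.den := by exact_mod_cast r.den_pos
  have hXd : X ≤ (r.den : ℝ) ^ j :=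
    ((le_max_left _ _).trans hB).trans (hBR.trans (le_self_pow₀ hden1 (by omega)))
  have hmono := hX _ _ hXd hleR
  rw [psiJ_pow Ψ j hj _ hrden0.le] at hmono
  refine ⟨r.den, ?_, r.den_pos, fun _ => r.num, ?_⟩
  · have : (N : ℝ) ≤ r.den := ((le_max_right _ _).trans hB).trans hBR
    exact_mod_cast this
  · intro i
    have hi : (i : ℕ) = 0 := by omega
    rw [hi, psiJ_one, zero_add, pow_one]
    have e5 : |(r.den : ℝ) * ζ - r.num| = r.den * |ζ - r| := by
      rw [hrr]
      generalize (r.den : ℝ) = d at hrden0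
      have hd0 : d ≠ 0 := hrden0.ne'
      have e6 : d * ζ - r.num = d * (ζ - r.num / d) := by field_simp
      rw [e6, abs_mul, abs_of_pos hrden0]
    rw [e5]
    have hpw : (r.den : ℝ) ^ j = (r.den : ℝ) ^ (j - 1) * r.den := by
      rw [← pow_succ]; congr 1; omega
    have h20 : (r.den : ℝ) ^ (j - 1) * (r.den * |ζ - r|) ≤
        (r.den : ℝ) ^ (j - 1) * (c * Ψ r.den) := by
      calc _ = (r.den : ℝ) ^ j * |ζ - r| := by rw [hpw]; ring
        _ ≤ q * |ζ - r| := by gcongr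
        _ ≤ c * psiJ Ψ j q := by rw [← e2]; exact hp0
        _ ≤ c * (Ψ r.den * (r.den : ℝ) ^ (j - 1)) := by gcongr
        _ = _ := by ring
    exact le_of_mul_le_mul_left h20 (by positivity)

/-- If `Ψ` is admissible of degree `k` (positive on `(0,∞)`, `Ψ(x) = o(x^{-2k+1})`, and
`Ψ(x)/Ψ(y) ≥ (y/x)^{k-1}` for all large `x ≤ y`), then each `Ψ_j` (for `1 ≤ j ≤ k`)
satisfies `Ψ_j(x) = o(1/x)`, is non-increasing for large arguments, and the difference
sets `𝒦^j = 𝒦_j(Ψ_j) \ ⋃_{0<c<1} 𝒦_j(cΨ_j)` all coincide within `(-1/2, 1/2)`. -/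
theorem admissible_transfer (k : ℕ) (hk : 1 ≤ k) (Ψ : ℝ → ℝ)
    (hpos : ∀ x : ℝ, 0 < x → 0 < Ψ x)
    (hdecay : Tendsto (fun x : ℝ => x ^ (2 * k - 1) * Ψ x) atTop (nhds 0))
    (hB0 : ∃ X : ℝ, 0 < X ∧ ∀ x y : ℝ, X ≤ x → x ≤ y → (y / x) ^ (k - 1) ≤ Ψ x / Ψ y) :
    ∀ j : ℕ, 1 ≤ j → j ≤ k →
      Tendsto (fun x : ℝ => x * psiJ Ψ j x) atTop (nhds 0) ∧
      (∃ X : ℝ, ∀ x y : ℝ, X ≤ x → x ≤ y → psiJ Ψ j y ≤ psiJ Ψ j x) ∧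
      Ioo (-(1 / 2) : ℝ) (1 / 2) ∩
          (Kk j (fun q : ℕ => psiJ Ψ j q) \
            ⋃ c ∈ Ioo (0 : ℝ) 1, Kk j (fun q : ℕ => c * psiJ Ψ j q)) =
        Ioo (-(1 / 2) : ℝ) (1 / 2) ∩
          (Kk 1 (fun q : ℕ => psiJ Ψ 1 q) \
            ⋃ c ∈ Ioo (0 : ℝ) 1, Kk 1 (fun q : ℕ => c * psiJ Ψ 1 q)) := by
  intro j hj hjk
  refine ⟨decayJ k Ψ hpos hdecay j hj hjk, monoJ k Ψ hpos hB0 j hj hjk, ?_⟩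
  have key : ∀ c : ℝ, 0 < c → c ≤ 1 → ∀ ζ : ℝ, |ζ| < 1 / 2 →
      (ζ ∈ Kk j (fun q : ℕ => c * psiJ Ψ j q) ↔ ζ ∈ Kk 1 (fun q : ℕ => c * psiJ Ψ 1 q)) :=
    fun c h0 h1 ζ hζ => ⟨bwd k Ψ hpos hdecay hB0 j hj hjk c h0 h1 ζ hζ,
      fwd k Ψ hpos hdecay j hj hjk c h1 ζ hζ⟩
  ext ζ
  simp only [Set.mem_inter_iff, Set.mem_sdiff, Set.mem_iUnion, not_exists]
  apply and_congr_right
  intro hI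
  have hζ : |ζ| < 1 / 2 := abs_lt.2 hI
  have h1 := key 1 one_pos le_rfl ζ hζ
  simp only [one_mul] at h1
  rw [h1]
  apply and_congr_right
  intro _
  exact forall_congr' fun c => forall_congr' fun hc => not_congr (key c hc.1 hc.2.le ζ hζ)
end
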